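/- arXiv:1611.06778 — 13 statements merged into one kernel-verified Lean document; each statement's English description precedes it below -/
import Mathlib

section
/- Let I ⊆ ℝ be an open interval, s : I → ℝ a strictly increasing continuous function, and μ its Stieltjes measure. Let μ = g·λ + κ be the Lebesgue decomposition of μ with respect to Lebesgue measure λ on I, where g ≥ 0 is locally integrable and κ ⊥ λ. If λ is absolutely continuous with respect to μ, then g(x) > 0 for λ-almost every x ∈ I; consequently, for any fixed e ∈ I, the function s̄(x) := ∫_e^x g(u) du is strictly increasing and continuous on I. -/
open MeasureTheory Set

/-- If `ν ≪ ν.withDensity f + κ` with `κ` singular to `ν`, then `f` is nonzero `ν`-almost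
everywhere. -/
theorem ae_ne_zero_of_absolutelyContinuous_withDensity_add {α : Type*} [MeasurableSpace α]
    {ν κ : Measure α} {f : α → ENNReal} (hf : AEMeasurable f ν) (hsing : κ.MutuallySingular ν)
    (habs : ν ≪ ν.withDensity f + κ) : ∀ᵐ x ∂ν, f x ≠ 0 := by
  obtain ⟨T, -, hκT, hνT⟩ := hsing
  have hdens : ν.withDensity f ({x | f x = 0} ∩ T) = 0 := by
    rw [withDensity_apply_eq_zero' hf]
    convert measure_empty (μ := ν)
    ext x
    simp +contextual
  have hzero : ν ({x | f x = 0} ∩ T) = 0 := by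
    apply habs
    rw [Measure.add_apply, hdens, measure_mono_null inter_subset_right hκT, add_zero]
  rw [ae_iff]
  refine measure_mono_null (fun x hx => ?_) (measure_union_null hzero hνT)
  by_cases hxT : x ∈ T
  · exact Or.inl ⟨not_not.mp hx, hxT⟩
  · exact Or.inr hxT

theorem MeasureTheory.LocallyIntegrableOn.intervalIntegrable_of_mem {I : Set ℝ}
    (hI : I.OrdConnected) {g : ℝ → ℝ} (hg : LocallyIntegrableOn g I volume) {a b : ℝ}
    (ha : a ∈ I) (hb : b ∈ I) : IntervalIntegrable g volume a b :=
  (hg.integrableOn_compact_subset (hI.uIcc_subset ha hb) isCompact_uIcc).intervalIntegrable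

theorem strictMonoOn_intervalIntegral_of_ae_pos {I : Set ℝ} (hI : I.OrdConnected) {g : ℝ → ℝ}
    (hg : LocallyIntegrableOn g I volume) (hpos : ∀ᵐ x ∂(volume.restrict I), 0 < g x)
    {e : ℝ} (he : e ∈ I) : StrictMonoOn (fun x => ∫ u in e..x, g u) I := by
  intro x hx y hy hxy
  have hxyI : Ioc x y ⊆ I := Ioc_subset_Icc_self.trans (hI.out hx hy)
  have hpos' : ∀ᵐ u ∂(volume.restrict (Ioc x y)), 0 < g u :=
    ae_restrict_of_ae_restrict_of_subset hxyI hpos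
  have hint := hg.intervalIntegrable_of_mem hI hx hy
  have hlt : 0 < ∫ u in x..y, g u := by
    rw [intervalIntegral.integral_of_le hxy.le,
      integral_pos_iff_support_of_nonneg_ae (hpos'.mono fun _ h => h.le) hint.1]
    have hsupp : Function.support g =ᵐ[volume.restrict (Ioc x y)] univ :=
      Filter.eventuallyEq_univ.mpr (hpos'.mono fun _ h => h.ne')
    simpa [measure_congr hsupp] using hxy
  have hadd := intervalIntegral.integral_add_adjacent_intervals
    (hg.intervalIntegrable_of_mem hI he hx) hint
  change ∫ u in e..x, g u < ∫ u in e..y, g u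
  linarith

theorem continuousOn_intervalIntegral_of_locallyIntegrableOn {I : Set ℝ} (hIopen : IsOpen I)
    (hI : I.OrdConnected) {g : ℝ → ℝ} (hg : LocallyIntegrableOn g I volume)
    {e : ℝ} (he : e ∈ I) : ContinuousOn (fun x => ∫ u in e..x, g u) I := by
  intro x hx
  obtain ⟨a, b, hxab, hab⟩ := mem_nhds_iff_exists_Ioo_subset.mp (hIopen.mem_nhds hx)
  obtain ⟨c, hac, hcx⟩ := exists_between hxab.1
  obtain ⟨d, hxd, hdb⟩ := exists_between hxab.2
  have hc : min c e ∈ I := by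
    rcases min_choice c e with h | h <;> rw [h]
    exacts [hab ⟨hac, hcx.trans hxab.2⟩, he]
  have hd : max d e ∈ I := by
    rcases max_choice d e with h | h <;> rw [h]
    exacts [hab ⟨hxab.1.trans hxd, hdb⟩, he]
  have hcd : min c e ≤ max d e := (min_le_right c e).trans (le_max_right d e)
  have hcont := intervalIntegral.continuousOn_primitive_interval'
    (hg.intervalIntegrable_of_mem hI hc hd)
    (uIcc_of_le hcd ▸ ⟨min_le_right c e, le_max_right d e⟩ : e ∈ uIcc (min c e) (max d e))
  refine (hcont.continuousAt ?_).continuousWithinAt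
  rw [uIcc_of_le hcd]
  exact Icc_mem_nhds ((min_le_left c e).trans_lt hcx) (hxd.trans_le (le_max_left d e))

/-- If the Lebesgue measure on the open interval `I` is absolutely continuous
with respect to the Stieltjes measure `μ` of the strictly increasing continuous `s : I → ℝ`,
whose Lebesgue decomposition is `μ = g·λ + κ` with `κ ⊥ λ`, then `g > 0` a.e. on `I`, and
consequently `s̄(x) = ∫_e^x g` is strictly increasing and continuous on `I`. -/
theorem stmt0 (I : Set ℝ) (hIopen : IsOpen I) (hIconn : I.OrdConnected)
    (s : ℝ → ℝ) (hmono : StrictMonoOn s I) (hcont : ContinuousOn s I)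
    (μ : Measure ℝ) (hμI : μ Iᶜ = 0)
    (hμ : ∀ x ∈ I, ∀ y ∈ I, x ≤ y → μ (Set.Ioc x y) = ENNReal.ofReal (s y - s x))
    (g : ℝ → ℝ) (hg0 : ∀ x, 0 ≤ g x)
    (hgloc : LocallyIntegrableOn g I volume)
    (κ : Measure ℝ)
    (hdecomp : μ = (volume.restrict I).withDensity (fun x => ENNReal.ofReal (g x)) + κ)
    (hsing : κ.MutuallySingular (volume.restrict I))
    (habs : volume.restrict I ≪ μ)
    (e : ℝ) (he : e ∈ I) :
    (∀ᵐ x ∂(volume.restrict I), 0 < g x) ∧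
    StrictMonoOn (fun x => ∫ u in e..x, g u) I ∧
    ContinuousOn (fun x => ∫ u in e..x, g u) I := by
  have hpos : ∀ᵐ x ∂(volume.restrict I), 0 < g x := by
    have hmeas : AEMeasurable (fun x => ENNReal.ofReal (g x)) (volume.restrict I) :=
      hgloc.aestronglyMeasurable.aemeasurable.ennreal_ofReal
    filter_upwards [ae_ne_zero_of_absolutelyContinuous_withDensity_add hmeas hsing
      (hdecomp ▸ habs)] with x hx
    exact ENNReal.ofReal_pos.mp (pos_iff_ne_zero.mpr hx)
  exact ⟨hpos, strictMonoOn_intervalIntegral_of_ae_pos hIconn hgloc hpos he,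
    continuousOn_intervalIntegral_of_locallyIntegrableOn hIopen hIconn hgloc he⟩
end

section
/- Let I, J ⊆ ℝ be open intervals, s : I → J a strictly increasing continuous bijection with inverse t : J → I, and μ the Stieltjes measure of s. Then t is absolutely continuous on J (i.e., there exists a locally integrable function g ≥ 0 on J with t(y) − t(x) = ∫_x^y g(u) du for all x ≤ y in J) if and only if Lebesgue measure λ on I is absolutely continuous with respect to μ. -/
open MeasureTheory Set

/-- Every point of an open set of reals lies in an open interval
with rational endpoints in the set. -/
lemma exists_rat_mem_Ioo {I : Set ℝ} (hI : IsOpen I) {x : ℝ} (hx : x ∈ I) :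
    ∃ a b : ℚ, (a : ℝ) ∈ I ∧ (b : ℝ) ∈ I ∧ x ∈ Ioo (a : ℝ) b := by
  obtain ⟨ε, hε, hball⟩ := Metric.isOpen_iff.1 hI x hx
  obtain ⟨a, ha₁, ha₂⟩ := exists_rat_btwn (show x - ε < x by linarith)
  obtain ⟨b, hb₁, hb₂⟩ := exists_rat_btwn (show x < x + ε by linarith)
  refine ⟨a, b, hball ?_, hball ?_, ha₂, hb₁⟩ <;>
    rw [Metric.mem_ball, Real.dist_eq, abs_lt] <;> constructor <;> linarith

/-- Two measures concentrated on an open interval coincide if they agree and are finite on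
the half-open intervals with endpoints in it. -/
lemma measure_eq_of_Ioc_eq {I : Set ℝ} (hI : IsOpen I) (hIc : I.OrdConnected) {μ ν : Measure ℝ}
    (hμI : μ Iᶜ = 0) (hνI : ν Iᶜ = 0)
    (hfin : ∀ x ∈ I, ∀ y ∈ I, x ≤ y → μ (Ioc x y) ≠ ⊤)
    (h : ∀ x ∈ I, ∀ y ∈ I, x ≤ y → μ (Ioc x y) = ν (Ioc x y)) : μ = ν := by
  have key : ∀ a ∈ I, ∀ b ∈ I, μ.restrict (Ioc a b) = ν.restrict (Ioc a b) := by
    intro a ha b hb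
    rcases lt_or_ge b a with hab | hab
    · simp [Ioc_eq_empty_of_le hab.le]
    have : IsFiniteMeasure (μ.restrict (Ioc a b)) :=
      ⟨by simpa using (hfin a ha b hb hab).lt_top⟩
    refine Measure.ext_of_Ioc _ _ fun x y _ => ?_
    rw [Measure.restrict_apply measurableSet_Ioc, Measure.restrict_apply measurableSet_Ioc,
      Ioc_inter_Ioc]
    rcases lt_or_ge (min y b) (max x a) with hlt | hle
    · simp [Ioc_eq_empty_of_le hlt.le]
    · have hxa : max x a ∈ I :=
        hIc.out ha hb ⟨le_max_right _ _, hle.trans (min_le_right _ _)⟩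
      have hyb : min y b ∈ I :=
        hIc.out ha hb ⟨(le_max_right _ _).trans hle, min_le_right _ _⟩
      exact h _ hxa _ hyb hle
  let K : Set (ℚ × ℚ) := {p | (p.1 : ℝ) ∈ I ∧ (p.2 : ℝ) ∈ I}
  have hcover : I = ⋃ p : K, Ioc (p.1.1 : ℝ) p.1.2 := by
    ext x
    simp only [mem_iUnion]
    constructor
    · intro hx
      obtain ⟨a, b, ha, hb, hab⟩ := exists_rat_mem_Ioo hI hx
      exact ⟨⟨(a, b), ha, hb⟩, Ioo_subset_Ioc_self hab⟩
    · rintro ⟨p, hp⟩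
      exact hIc.out p.2.1 p.2.2 (Ioc_subset_Icc_self hp)
  have hres : μ.restrict I = ν.restrict I := by
    rw [hcover, Measure.restrict_iUnion_congr]
    exact fun p => key _ p.2.1 _ p.2.2
  rwa [Measure.restrict_eq_self_of_ae_mem (mem_ae_iff.2 hμI),
    Measure.restrict_eq_self_of_ae_mem (mem_ae_iff.2 hνI)] at hres

lemma StrictMonoOn.preimage_Ioc_inter {I : Set ℝ} (hIc : I.OrdConnected) {s : ℝ → ℝ}
    (hs : StrictMonoOn s I) {a b : ℝ} (ha : a ∈ I) (hb : b ∈ I) :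
    s ⁻¹' Ioc (s a) (s b) ∩ I = Ioc a b := by
  ext x
  constructor
  · rintro ⟨⟨h₁, h₂⟩, hx⟩
    exact ⟨(hs.lt_iff_lt ha hx).1 h₁, (hs.le_iff_le hx hb).1 h₂⟩
  · intro h
    have hx : x ∈ I := hIc.out ha hb (Ioc_subset_Icc_self h)
    exact ⟨⟨(hs.lt_iff_lt ha hx).2 h.1, (hs.le_iff_le hx hb).2 h.2⟩, hx⟩

lemma ContinuousOn.map_restrict_apply {I : Set ℝ} (hI : MeasurableSet I) {s : ℝ → ℝ}
    (hs : ContinuousOn s I) (μ : Measure ℝ) {B : Set ℝ} (hB : MeasurableSet B) :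
    (μ.restrict I).map s B = μ (s ⁻¹' B ∩ I) := by
  rw [Measure.map_apply_of_aemeasurable (hs.aemeasurable hI) hB, Measure.restrict_apply' hI]

/-- Absolute continuity between measures on `I` is equivalent to absolute continuity between
their images under a map that is continuous and injective on `I`. -/
lemma ContinuousOn.map_restrict_absolutelyContinuous_iff {I : Set ℝ} (hI : MeasurableSet I)
    {s : ℝ → ℝ} (hs : ContinuousOn s I) (hinj : InjOn s I) (μ ν : Measure ℝ) :
    (μ.restrict I).map s ≪ (ν.restrict I).map s ↔ μ.restrict I ≪ ν.restrict I := by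
  constructor
  · intro h
    refine Measure.AbsolutelyContinuous.mk fun A hA hνA => ?_
    have hB : MeasurableSet (s '' (A ∩ I)) :=
      (hA.inter hI).image_of_continuousOn_injOn (hs.mono inter_subset_right)
        (hinj.mono inter_subset_right)
    have hpre : s ⁻¹' (s '' (A ∩ I)) ∩ I = A ∩ I := by
      ext x
      constructor
      · rintro ⟨⟨z, hz, hzx⟩, hx⟩
        exact hinj hz.2 hx hzx ▸ hz
      · exact fun hx => ⟨mem_image_of_mem s hx, hx.2⟩
    have := @h (s '' (A ∩ I))
    rw [hs.map_restrict_apply hI _ hB, hs.map_restrict_apply hI _ hB, hpre] at this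
    rw [Measure.restrict_apply hA] at hνA ⊢
    exact this hνA
  · intro h
    refine Measure.AbsolutelyContinuous.mk fun B hB hνB => ?_
    rw [Measure.map_apply_of_aemeasurable (hs.aemeasurable hI) hB] at hνB ⊢
    exact h hνB

/-- A measure concentrated on an open interval `J` and given on half-open intervals by the
increments of `t` is absolutely continuous with respect to Lebesgue measure on `J` iff `t` has a
nonnegative locally integrable density on `J`. -/
lemma exists_density_iff_absolutelyContinuous {J : Set ℝ} (hJ : IsOpen J) (hJc : J.OrdConnected)
    {t : ℝ → ℝ} (ht : MonotoneOn t J) {ρ : Measure ℝ} [SFinite ρ] (hρJ : ρ Jᶜ = 0)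
    (hρ : ∀ x ∈ J, ∀ y ∈ J, x ≤ y → ρ (Ioc x y) = ENNReal.ofReal (t y - t x)) :
    (∃ g : ℝ → ℝ, (∀ u, 0 ≤ g u) ∧ LocallyIntegrableOn g J volume ∧
      ∀ x ∈ J, ∀ y ∈ J, x ≤ y → t y - t x = ∫ u in x..y, g u) ↔
    ρ ≪ volume.restrict J := by
  have hsub : ∀ x ∈ J, ∀ y ∈ J, Ioc x y ⊆ J := fun x hx y hy =>
    Ioc_subset_Icc_self.trans (hJc.out hx hy)
  constructor
  · rintro ⟨g, hg0, hgloc, hg⟩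
    have : ρ = (volume.restrict J).withDensity fun u => ENNReal.ofReal (g u) := by
      refine measure_eq_of_Ioc_eq hJ hJc hρJ ?_ ?_ ?_
      · exact withDensity_absolutelyContinuous _ _
          (by simp [Measure.restrict_apply hJ.measurableSet.compl])
      · intro x hx y hy hxy
        simp [hρ x hx y hy hxy]
      · intro x hx y hy hxy
        have hint : IntegrableOn g (Ioc x y) :=
          (hgloc.integrableOn_compact_subset (hJc.out hx hy) isCompact_Icc).mono_set
            Ioc_subset_Icc_self
        rw [hρ x hx y hy hxy, hg x hx y hy hxy, intervalIntegral.integral_of_le hxy,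
          withDensity_apply _ measurableSet_Ioc, Measure.restrict_restrict measurableSet_Ioc,
          inter_eq_left.2 (hsub x hx y hy),
          ofReal_integral_eq_lintegral_ofReal hint (Filter.Eventually.of_forall hg0)]
    rw [this]
    exact withDensity_absolutelyContinuous _ _
  · intro hac
    set f := ρ.rnDeriv (volume.restrict J) with hf
    have hfm : Measurable f := Measure.measurable_rnDeriv _ _
    have hlint : ∀ x ∈ J, ∀ y ∈ J, x ≤ y →
        ∫⁻ u in Ioc x y, f u = ENNReal.ofReal (t y - t x) := by
      intro x hx y hy hxy
      rw [← hρ x hx y hy hxy, ← Measure.withDensity_rnDeriv_eq ρ _ hac,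
        withDensity_apply _ measurableSet_Ioc, Measure.restrict_restrict measurableSet_Ioc,
        inter_eq_left.2 (hsub x hx y hy)]
    have hne : ∀ x ∈ J, ∀ y ∈ J, x ≤ y → ∫⁻ u in Ioc x y, f u ≠ ⊤ := by
      intro x hx y hy hxy
      simp [hlint x hx y hy hxy]
    refine ⟨fun u => (f u).toReal, fun u => ENNReal.toReal_nonneg, ?_, ?_⟩
    · intro x hx
      obtain ⟨a, b, ha, hb, hab⟩ := exists_rat_mem_Ioo hJ hx
      exact ⟨Ioc a b, mem_nhdsWithin_of_mem_nhds (Ioc_mem_nhds hab.1 hab.2),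
        integrable_toReal_of_lintegral_ne_top hfm.aemeasurable
          (hne a ha b hb (hab.1.trans hab.2).le)⟩
    · intro x hx y hy hxy
      rw [intervalIntegral.integral_of_le hxy, integral_toReal hfm.aemeasurable
        (ae_lt_top hfm (hne x hx y hy hxy)), hlint x hx y hy hxy,
        ENNReal.toReal_ofReal (sub_nonneg.2 (ht hx hy hxy))]

/-- For a strictly increasing continuous bijection `s : I → J` between open
intervals with inverse `t` and Stieltjes measure `μ`, the inverse `t` is absolutely continuous
on `J` (has a nonnegative locally integrable density) iff Lebesgue measure on `I` is absolutely
continuous with respect to `μ`. -/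
theorem stmt1 (I J : Set ℝ) (hIopen : IsOpen I) (hIconn : I.OrdConnected)
    (hJopen : IsOpen J) (hJconn : J.OrdConnected)
    (s t : ℝ → ℝ) (hmono : StrictMonoOn s I) (hcont : ContinuousOn s I)
    (hmaps : Set.MapsTo s I J) (hsurj : Set.SurjOn s I J)
    (hts : ∀ x ∈ I, t (s x) = x) (hst : ∀ y ∈ J, s (t y) = y)
    (μ : Measure ℝ) (hμI : μ Iᶜ = 0)
    (hμ : ∀ x ∈ I, ∀ y ∈ I, x ≤ y → μ (Set.Ioc x y) = ENNReal.ofReal (s y - s x)) :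
    (∃ g : ℝ → ℝ, (∀ u, 0 ≤ g u) ∧ LocallyIntegrableOn g J volume ∧
      ∀ x ∈ J, ∀ y ∈ J, x ≤ y → t y - t x = ∫ u in x..y, g u) ↔
    volume.restrict I ≪ μ := by
  have hImeas : MeasurableSet I := hIopen.measurableSet
  have hμres : μ.restrict I = μ := Measure.restrict_eq_self_of_ae_mem (mem_ae_iff.2 hμI)
  have hnull : ∀ m : Measure ℝ, (m.restrict I).map s Jᶜ = 0 := by
    intro m
    rw [hcont.map_restrict_apply hImeas m hJopen.measurableSet.compl]
    convert measure_empty (μ := m)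
    ext x
    simpa using fun hx hxI => hx (hmaps hxI)
  have himage : (μ.restrict I).map s = volume.restrict J := by
    have hIoc : ∀ x ∈ J, ∀ y ∈ J, x ≤ y →
        (μ.restrict I).map s (Ioc x y) = ENNReal.ofReal (y - x) := by
      intro x hx y hy hxy
      obtain ⟨a, ha, rfl⟩ := hsurj hx
      obtain ⟨b, hb, rfl⟩ := hsurj hy
      rw [hcont.map_restrict_apply hImeas μ measurableSet_Ioc,
        hmono.preimage_Ioc_inter hIconn ha hb, hμ a ha b hb ((hmono.le_iff_le ha hb).1 hxy)]
    refine measure_eq_of_Ioc_eq hJopen hJconn (hnull μ)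
      (by simp [Measure.restrict_apply hJopen.measurableSet.compl]) ?_ ?_
    · intro x hx y hy hxy
      simp [hIoc x hx y hy hxy]
    · intro x hx y hy hxy
      rw [hIoc x hx y hy hxy, Measure.restrict_apply measurableSet_Ioc,
        inter_eq_left.2 (Ioc_subset_Icc_self.trans (hJconn.out hx hy)), Real.volume_Ioc]
  have htmono : MonotoneOn t J := by
    intro x hx y hy hxy
    obtain ⟨a, ha, rfl⟩ := hsurj hx
    obtain ⟨b, hb, rfl⟩ := hsurj hy
    rw [hts a ha, hts b hb]
    exact (hmono.le_iff_le ha hb).1 hxy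
  rw [exists_density_iff_absolutelyContinuous hJopen hJconn htmono (hnull volume), ← himage,
    hcont.map_restrict_absolutelyContinuous_iff hImeas hmono.injOn, hμres]
  intro x hx y hy _
  obtain ⟨a, ha, rfl⟩ := hsurj hx
  obtain ⟨b, hb, rfl⟩ := hsurj hy
  rw [hcont.map_restrict_apply hImeas volume measurableSet_Ioc,
    hmono.preimage_Ioc_inter hIconn ha hb, Real.volume_Ioc, hts a ha, hts b hb]
end

section
/- Let I, J ⊆ ℝ be open intervals, s : I → J a strictly increasing continuous bijection with inverse t, μ the Stieltjes measure of s, and suppose t is absolutely continuous on J with density g (a locally integrable function with t(y) − t(x) = ∫_x^y g(u) du for all x ≤ y in J). Then Lebesgue measure on I equals the measure (g∘s)·μ; that is, for every Borel set A ⊆ I, λ(A) = ∫_A g(s(x)) dμ(x). -/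
open MeasureTheory Set

/-- An open subset of the real line is a countable union of half-open intervals with rational
endpoints whose closures it contains. -/
theorem IsOpen.eq_iUnion_Ioc_rat {U : Set ℝ} (hU : IsOpen U) :
    U = ⋃ p : {p : ℚ × ℚ // (p.1 : ℝ) < p.2 ∧ Icc (p.1 : ℝ) p.2 ⊆ U},
      Ioc (p.1.1 : ℝ) p.1.2 := by
  ext x
  simp only [mem_iUnion]
  constructor
  · intro hx
    obtain ⟨a, b, hxab, hab⟩ := mem_nhds_iff_exists_Ioo_subset.1 (hU.mem_nhds hx)
    obtain ⟨p, hap, hpx⟩ := exists_rat_btwn hxab.1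
    obtain ⟨q, hxq, hqb⟩ := exists_rat_btwn hxab.2
    exact ⟨⟨(p, q), hpx.trans hxq, fun y hy ↦ hab ⟨hap.trans_le hy.1, hy.2.trans_lt hqb⟩⟩,
      hpx, hxq.le⟩
  · rintro ⟨p, hp⟩
    exact p.2.2 (Ioc_subset_Icc_self hp)

/-- Two measures that agree and are finite on the half-open intervals with endpoints in an open
interval agree on that interval. -/
theorem MeasureTheory.Measure.restrict_eq_of_Ioc {U : Set ℝ} (hU : IsOpen U)
    (hUconn : U.OrdConnected) {μ ν : Measure ℝ}
    (hfin : ∀ a ∈ U, ∀ b ∈ U, a ≤ b → μ (Ioc a b) ≠ ⊤)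
    (h : ∀ a ∈ U, ∀ b ∈ U, a ≤ b → μ (Ioc a b) = ν (Ioc a b)) :
    μ.restrict U = ν.restrict U := by
  rw [hU.eq_iUnion_Ioc_rat, Measure.restrict_iUnion_congr]
  rintro ⟨⟨p, q⟩, hpq, hsub⟩
  dsimp only at hpq hsub ⊢
  have hp : (p : ℝ) ∈ U := hsub (left_mem_Icc.2 hpq.le)
  have hq : (q : ℝ) ∈ U := hsub (right_mem_Icc.2 hpq.le)
  have : IsFiniteMeasure (μ.restrict (Ioc (p : ℝ) q)) :=
    isFiniteMeasure_restrict.2 (hfin p hp q hq hpq.le)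
  refine Measure.ext_of_Ioc _ _ fun a b _ ↦ ?_
  rw [Measure.restrict_apply measurableSet_Ioc, Measure.restrict_apply measurableSet_Ioc,
    Ioc_inter_Ioc]
  rcases le_or_gt (max a (p : ℝ)) (min b q) with hle | hlt
  · exact h _ (hUconn.out hp hq ⟨le_max_right _ _, hle.trans (min_le_right _ _)⟩) _
      (hUconn.out hp hq ⟨(le_max_right _ _).trans hle, min_le_right _ _⟩) hle
  · simp [Ioc_eq_empty_of_le hlt.le]

/-- A density of a monotone function is nonnegative almost everywhere. -/
theorem MonotoneOn.ae_nonneg_of_eq_integral {J : Set ℝ} (hJ : IsOpen J) {t g : ℝ → ℝ}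
    (ht : MonotoneOn t J) (hg : LocallyIntegrableOn g J)
    (h : ∀ x ∈ J, ∀ y ∈ J, x ≤ y → t y - t x = ∫ u in x..y, g u) :
    ∀ᵐ u ∂volume.restrict J, 0 ≤ g u := by
  rw [hJ.eq_iUnion_Ioc_rat, ae_restrict_iUnion_iff]
  rintro ⟨⟨p, q⟩, hpq, hsub⟩
  dsimp only at hpq hsub ⊢
  have hint : IntervalIntegrable g volume p q :=
    (intervalIntegrable_iff_integrableOn_Icc_of_le hpq.le).2
      (hg.integrableOn_compact_subset hsub isCompact_Icc)
  rw [ae_restrict_iff' measurableSet_Ioc]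
  filter_upwards [hint.ae_hasDerivAt_integral, Measure.ae_ne volume (q : ℝ)] with x hx hxq hxpq
  rw [uIcc_of_le hpq.le] at hx
  have hp := left_mem_Icc.2 hpq.le
  have hd := hx (Ioc_subset_Icc_self hxpq) p hp
  refine hd.hasDerivWithinAt.nonneg_of_monotoneOn (s := Icc (p : ℝ) q) ?_ fun y hy z hz hyz ↦ ?_
  · exact (uniqueDiffOn_Icc hpq x (Ioc_subset_Icc_self hxpq)).accPt
  · have hy' := h p (hsub hp) y (hsub hy) hy.1
    have hz' := h p (hsub hp) z (hsub hz) hz.1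
    have := ht (hsub hy) (hsub hz) hyz
    dsimp only
    linarith

/-- If the inverse `t` of the strictly increasing continuous bijection
`s : I → J` is absolutely continuous with density `g`, then Lebesgue measure on `I` equals
the measure `(g∘s)·μ`, i.e. `λ(A) = ∫_A g(s(x)) dμ(x)` for all Borel `A ⊆ I`, where `μ` is
the Stieltjes measure of `s`. -/
theorem stmt2 (I J : Set ℝ) (hIopen : IsOpen I) (hIconn : I.OrdConnected)
    (hJopen : IsOpen J) (hJconn : J.OrdConnected)
    (s t : ℝ → ℝ) (hmono : StrictMonoOn s I) (hcont : ContinuousOn s I)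
    (hmaps : Set.MapsTo s I J) (hsurj : Set.SurjOn s I J)
    (hts : ∀ x ∈ I, t (s x) = x) (hst : ∀ y ∈ J, s (t y) = y)
    (μ : Measure ℝ) (hμI : μ Iᶜ = 0)
    (hμ : ∀ x ∈ I, ∀ y ∈ I, x ≤ y → μ (Set.Ioc x y) = ENNReal.ofReal (s y - s x))
    (g : ℝ → ℝ) (hgloc : LocallyIntegrableOn g J volume)
    (hgdens : ∀ x ∈ J, ∀ y ∈ J, x ≤ y → t y - t x = ∫ u in x..y, g u) :
    ∀ A ⊆ I, MeasurableSet A →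
      volume A = ∫⁻ x in A, ENNReal.ofReal (g (s x)) ∂μ := by
  intro A hAI hA
  have hImeas := hIopen.measurableSet
  have htI : MapsTo t J I := fun y hy ↦ by
    obtain ⟨x, hx, rfl⟩ := hsurj hy
    rwa [hts x hx]
  have htmono : MonotoneOn t J := fun x hx y hy hxy ↦
    (hmono.le_iff_le (htI hx) (htI hy)).1 (by rwa [hst x hx, hst y hy])
  have hμres : μ.restrict I = μ := Measure.restrict_eq_self_of_ae_mem (by
    rw [ae_iff]; exact hμI)
  have hsvol : AEMeasurable s (volume.restrict I) := hcont.aemeasurable hImeas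
  have hsμ : AEMeasurable s μ := hμres ▸ hcont.aemeasurable hImeas
  have hpre : ∀ a ∈ J, ∀ b ∈ J, s ⁻¹' Ioc a b ∩ I = Ioc (t a) (t b) := by
    intro a ha b hb
    ext x
    simp only [mem_inter_iff, mem_preimage, mem_Ioc]
    constructor
    · rintro ⟨⟨h1, h2⟩, hx⟩
      rw [← hst a ha, hmono.lt_iff_lt (htI ha) hx] at h1
      rw [← hst b hb, hmono.le_iff_le hx (htI hb)] at h2
      exact ⟨h1, h2⟩
    · rintro ⟨h1, h2⟩
      have hx : x ∈ I := hIconn.out (htI ha) (htI hb) ⟨h1.le, h2⟩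
      rw [← hmono.lt_iff_lt (htI ha) hx, hst a ha] at h1
      rw [← hmono.le_iff_le hx (htI hb), hst b hb] at h2
      exact ⟨⟨h1, h2⟩, hx⟩
  have hmapμ : (μ.map s).restrict J = volume.restrict J := by
    refine (Measure.restrict_eq_of_Ioc hJopen hJconn (fun a _ b _ _ ↦ by simp)
      fun a ha b hb hab ↦ ?_).symm
    rw [Measure.map_apply_of_aemeasurable hsμ measurableSet_Ioc, ← hμres,
      Measure.restrict_apply₀' hImeas.nullMeasurableSet, hpre a ha b hb,
      hμ _ (htI ha) _ (htI hb) (htmono ha hb hab), hst a ha, hst b hb, Real.volume_Ioc]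
  have hgnn := htmono.ae_nonneg_of_eq_integral hJopen hgloc hgdens
  have hmapvol : ((volume.restrict I).map s).restrict J =
      (volume.withDensity fun u ↦ ENNReal.ofReal (g u)).restrict J := by
    have hval : ∀ a ∈ J, ∀ b ∈ J, a ≤ b →
        (volume.restrict I).map s (Ioc a b) = ENNReal.ofReal (t b - t a) := by
      intro a ha b hb _
      rw [Measure.map_apply_of_aemeasurable hsvol measurableSet_Ioc,
        Measure.restrict_apply₀' hImeas.nullMeasurableSet, hpre a ha b hb, Real.volume_Ioc]
    refine Measure.restrict_eq_of_Ioc hJopen hJconn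
      (fun a ha b hb hab ↦ by simp [hval a ha b hb hab]) fun a ha b hb hab ↦ ?_
    have hsub : Icc a b ⊆ J := hJconn.out ha hb
    rw [hval a ha b hb hab, withDensity_apply _ measurableSet_Ioc, hgdens a ha b hb hab,
      intervalIntegral.integral_of_le hab]
    exact ofReal_integral_eq_lintegral_ofReal
      ((hgloc.integrableOn_compact_subset hsub isCompact_Icc).mono_set Ioc_subset_Icc_self)
      (ae_restrict_of_ae_restrict_of_subset (Ioc_subset_Icc_self.trans hsub) hgnn)
  have hBmeas : MeasurableSet (s '' A) :=
    hA.image_of_continuousOn_injOn (hcont.mono hAI) (hmono.injOn.mono hAI)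
  have hBJ : s '' A ⊆ J := image_subset_iff.2 fun x hx ↦ hmaps (hAI hx)
  have hpreA : s ⁻¹' (s '' A) ∩ I = A := hmono.injOn.preimage_image_inter hAI
  have hmapB : (μ.map s).restrict (s '' A) = volume.restrict (s '' A) := by
    rw [← Measure.restrict_restrict_of_subset hBJ, hmapμ,
      Measure.restrict_restrict_of_subset hBJ]
  have hmapA : (μ.restrict A).map s = volume.restrict (s '' A) := by
    rw [← hmapB, Measure.restrict_map_of_aemeasurable hsμ hBmeas]
    conv_rhs => rw [← hμres, Measure.restrict_restrict₀' hImeas.nullMeasurableSet, hpreA]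
  have hgmeas : AEMeasurable (fun u ↦ ENNReal.ofReal (g u)) (volume.restrict (s '' A)) :=
    (hgloc.aestronglyMeasurable.aemeasurable.mono_set hBJ).ennreal_ofReal
  calc volume A = ((volume.restrict I).map s).restrict J (s '' A) := by
        rw [Measure.restrict_eq_self _ hBJ, Measure.map_apply_of_aemeasurable hsvol hBmeas,
          Measure.restrict_apply₀' hImeas.nullMeasurableSet, hpreA]
    _ = ∫⁻ u in s '' A, ENNReal.ofReal (g u) := by
        rw [hmapvol, Measure.restrict_eq_self _ hBJ, withDensity_apply _ hBmeas]
    _ = ∫⁻ x in A, ENNReal.ofReal (g (s x)) ∂μ := by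
        rw [← hmapA] at hgmeas ⊢
        exact lintegral_map' hgmeas hsμ.restrict
end

section
/- Let I, J ⊆ ℝ be open intervals, s : I → J a strictly increasing continuous bijection with inverse t, and suppose t is absolutely continuous on J with density g (a locally integrable function with t(y) − t(x) = ∫_x^y g(u) du for all x ≤ y in J). Then g(s(x)) > 0 for Lebesgue-almost every x ∈ I. -/
open MeasureTheory Set

/-- A function with nonnegative integrals over all subintervals is nonnegative almost
everywhere. -/
theorem ae_nonneg_of_forall_intervalIntegral_nonneg {a b : ℝ} {g : ℝ → ℝ} (hab : a < b)
    (hg : IntervalIntegrable g volume a b)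
    (hnonneg : ∀ x ∈ Icc a b, ∀ y ∈ Icc a b, x ≤ y → 0 ≤ ∫ u in x..y, g u) :
    ∀ᵐ x ∂volume.restrict (Ioc a b), 0 ≤ g x := by
  have hsub : ∀ {x}, x ∈ Icc a b → IntervalIntegrable g volume a x := fun {x} hx =>
    hg.mono_set (by rw [uIcc_of_le hx.1, uIcc_of_le hab.le]; exact Icc_subset_Icc_right hx.2)
  have hF : MonotoneOn (fun x => ∫ u in a..x, g u) (Icc a b) := by
    intro x hx y hy hxy
    have h := hnonneg x hx y hy hxy
    rw [← intervalIntegral.integral_interval_sub_left (hsub hy) (hsub hx)] at h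
    exact sub_nonneg.1 h
  rw [ae_restrict_iff' measurableSet_Ioc]
  filter_upwards [hg.ae_hasDerivAt_integral] with x hderiv hx
  rw [uIcc_of_le hab.le] at hderiv
  have hxI := Ioc_subset_Icc_self hx
  have h := (hderiv hxI a (left_mem_Icc.2 hab.le)).hasDerivWithinAt (s := Icc a b)
  rw [← h.derivWithin (uniqueDiffOn_Icc hab x hxI)]
  exact hF.derivWithin_nonneg

/-- The image of Lebesgue measure on `[t a, t b]` under the inverse `s` of a primitive `t` of `g`
has density `g` on `(a, b]`. -/
theorem map_restrict_Icc_eq_withDensity {a b : ℝ} {s t g : ℝ → ℝ} (hab : a < b)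
    (hs : AEMeasurable s (volume.restrict (Icc (t a) (t b))))
    (hmaps : MapsTo s (Icc (t a) (t b)) (Icc a b))
    (hle : ∀ x ∈ Icc (t a) (t b), ∀ y ∈ Icc a b, s x ≤ y ↔ x ≤ t y)
    (ht : MonotoneOn t (Icc a b))
    (hg : IntervalIntegrable g volume a b)
    (hdens : ∀ x ∈ Icc a b, ∀ y ∈ Icc a b, x ≤ y → t y - t x = ∫ u in x..y, g u) :
    (volume.restrict (Icc (t a) (t b))).map s =
      (volume.restrict (Ioc a b)).withDensity (fun y => ENNReal.ofReal (g y)) := by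
  have hpos : ∀ᵐ x ∂volume.restrict (Ioc a b), 0 ≤ g x := by
    refine ae_nonneg_of_forall_intervalIntegral_nonneg hab hg fun x hx y hy hxy => ?_
    rw [← hdens x hx y hy hxy]
    exact sub_nonneg.2 (ht hx hy hxy)
  have ha : a ∈ Icc a b := left_mem_Icc.2 hab.le
  have hb : b ∈ Icc a b := right_mem_Icc.2 hab.le
  have hlint : ∀ y ∈ Icc a b,
      ∫⁻ u in Ioc a y, ENNReal.ofReal (g u) = ENNReal.ofReal (t y - t a) := by
    intro y hy
    have hsub : Ioc a y ⊆ Ioc a b := Ioc_subset_Ioc_right hy.2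
    rw [hdens a ha y hy hy.1, intervalIntegral.integral_of_le hy.1,
      ofReal_integral_eq_lintegral_ofReal (hg.1.mono_set hsub)
        (ae_restrict_of_ae_restrict_of_subset hsub hpos)]
  refine Measure.ext_of_Iic _ _ fun y => ?_
  rw [Measure.map_apply_of_aemeasurable hs measurableSet_Iic,
    Measure.restrict_apply₀' measurableSet_Icc.nullMeasurableSet,
    withDensity_apply _ measurableSet_Iic, Measure.restrict_restrict measurableSet_Iic]
  rcases lt_or_ge y a with hya | hay
  · have h₁ : s ⁻¹' Iic y ∩ Icc (t a) (t b) = ∅ := by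
      ext x
      simp only [mem_inter_iff, mem_preimage, mem_Iic, mem_empty_iff_false, iff_false, not_and]
      exact fun hx hxI => absurd (hmaps hxI).1 (not_le.2 (hx.trans_lt hya))
    have h₂ : Iic y ∩ Ioc a b = ∅ := by
      ext x
      simp only [mem_inter_iff, mem_Iic, mem_Ioc, mem_empty_iff_false, iff_false]
      rintro ⟨h, h', -⟩
      linarith
    simp [h₁, h₂]
  · have hz : min y b ∈ Icc a b := ⟨le_min hay hab.le, min_le_right _ _⟩
    have h₁ : s ⁻¹' Iic y ∩ Icc (t a) (t b) = Icc (t a) (t (min y b)) := by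
      ext x
      simp only [mem_inter_iff, mem_preimage, mem_Iic]
      constructor
      · exact fun ⟨hx, hxI⟩ => ⟨hxI.1, (hle x hxI _ hz).1 (le_min hx (hmaps hxI).2)⟩
      · intro hx
        have hxI : x ∈ Icc (t a) (t b) := ⟨hx.1, hx.2.trans (ht hz hb hz.2)⟩
        exact ⟨((hle x hxI _ hz).2 hx.2).trans (min_le_left _ _), hxI⟩
    have h₂ : Iic y ∩ Ioc a b = Ioc a (min y b) := by
      rw [inter_comm, Ioc_inter_Iic, min_comm]
    rw [h₁, h₂, Real.volume_Icc, hlint _ hz]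

/-- If the inverse `t` of the strictly increasing continuous bijection
`s : I → J` is absolutely continuous with density `g`, then `g(s(x)) > 0` for
Lebesgue-almost every `x ∈ I`. -/
theorem stmt3 (I J : Set ℝ) (hIopen : IsOpen I) (hIconn : I.OrdConnected)
    (hJopen : IsOpen J) (hJconn : J.OrdConnected)
    (s t : ℝ → ℝ) (hmono : StrictMonoOn s I) (hcont : ContinuousOn s I)
    (hmaps : Set.MapsTo s I J) (hsurj : Set.SurjOn s I J)
    (hts : ∀ x ∈ I, t (s x) = x) (hst : ∀ y ∈ J, s (t y) = y)
    (g : ℝ → ℝ) (hgloc : LocallyIntegrableOn g J volume)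
    (hgdens : ∀ x ∈ J, ∀ y ∈ J, x ≤ y → t y - t x = ∫ u in x..y, g u) :
    ∀ᵐ x ∂(volume.restrict I), 0 < g (s x) := by
  have htI : MapsTo t J I := by
    intro y hy
    obtain ⟨x, hx, rfl⟩ := hsurj hy
    rwa [hts x hx]
  have hle : ∀ x ∈ I, ∀ y ∈ J, s x ≤ y ↔ x ≤ t y := by
    intro x hx y hy
    conv_lhs => rw [← hst y hy]
    exact hmono.le_iff_le hx (htI hy)
  refine ae_restrict_of_ae_restrict_inter_Ioo fun c d hc hd hcd => ?_
  have hsub : Icc c d ⊆ I := hIconn.out hc hd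
  have hab : s c < s d := hmono hc hd hcd
  have hsubJ : Icc (s c) (s d) ⊆ J := hJconn.out (hmaps hc) (hmaps hd)
  have hg : IntervalIntegrable g volume (s c) (s d) := by
    rw [intervalIntegrable_iff_integrableOn_Icc_of_le hab.le]
    exact hgloc.integrableOn_compact_subset hsubJ isCompact_Icc
  have hs : AEMeasurable s (volume.restrict (Icc c d)) :=
    (hcont.mono hsub).aemeasurable measurableSet_Icc
  have hmap : (volume.restrict (Icc c d)).map s =
      (volume.restrict (Ioc (s c) (s d))).withDensity (fun y => ENNReal.ofReal (g y)) := by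
    have h := map_restrict_Icc_eq_withDensity (s := s) (t := t) (g := g) hab
    rw [hts c hc, hts d hd] at h
    refine h hs (hmono.monotoneOn.mono hsub).mapsTo_Icc
      (fun x hx y hy => hle x (hsub hx) y (hsubJ hy)) ?_ hg
      (fun x hx y hy => hgdens x (hsubJ hx) y (hsubJ hy))
    intro x hx y hy hxy
    rw [← hle _ (htI (hsubJ hx)) y (hsubJ hy), hst x (hsubJ hx)]
    exact hxy
  have hpos : ∀ᵐ x ∂volume.restrict (Icc c d), 0 < g (s x) := by
    refine ae_of_ae_map (p := fun y => 0 < g y) hs ?_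
    rw [hmap, ae_withDensity_iff' hg.1.aestronglyMeasurable.aemeasurable.ennreal_ofReal]
    exact ae_of_all _ fun y hy => by simpa using hy
  exact ae_restrict_of_ae_restrict_of_subset
    (inter_subset_right.trans Ioo_subset_Icc_self) hpos
end

section
/- Let I, J ⊆ ℝ be open intervals, s : I → J a strictly increasing continuous bijection with inverse t, and μ the Stieltjes measure of s. Suppose h : I → [0,∞) is measurable with ∫_{I'} h² dμ < ∞ for every compact I' ⊆ I, and suppose y − x = ∫_{(x,y]} h dμ for all x ≤ y in I. Then t(β) − t(α) = ∫_α^β h(t(u)) du for all α ≤ β in J (so t is absolutely continuous with density h∘t), and for every compact interval K ⊆ J one has ∫_K h(t(u))² du = ∫_{t(K)} h(x)² dμ(x) < ∞. -/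
open MeasureTheory Set

/-- A Stieltjes measure of a continuous function on an open set has no atoms there. -/
theorem measure_singleton_eq_zero_of_Ioc {I : Set ℝ} (hIopen : IsOpen I) {s : ℝ → ℝ}
    (hcont : ContinuousOn s I) {μ : Measure ℝ}
    (hμ : ∀ x ∈ I, ∀ y ∈ I, x ≤ y → μ (Ioc x y) = ENNReal.ofReal (s y - s x))
    {x : ℝ} (hx : x ∈ I) : μ {x} = 0 := by
  have hI : I ∈ nhds x := hIopen.mem_nhds hx
  have hlim : Filter.Tendsto (fun y => ENNReal.ofReal (s x - s y)) (nhdsWithin x (Iio x))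
      (nhds 0) := by
    have hs : Filter.Tendsto s (nhdsWithin x (Iio x)) (nhds (s x)) :=
      (hcont.continuousAt hI).tendsto.mono_left nhdsWithin_le_nhds
    simpa using ENNReal.tendsto_ofReal (hs.const_sub (s x))
  refine le_antisymm (ge_of_tendsto hlim ?_) bot_le
  filter_upwards [self_mem_nhdsWithin, mem_nhdsWithin_of_mem_nhds hI] with y hyx hyI
  rw [← hμ y hyI x hx (le_of_lt hyx)]
  exact measure_mono (singleton_subset_iff.2 ⟨hyx, le_rfl⟩)

/-- The inverse `t` of `s` pushes Lebesgue measure on `(α, β]` forward to the Stieltjes measure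
of `s` on `(t α, t β]`. -/
theorem map_restrict_Ioc_eq_restrict_Ioc {I J : Set ℝ} (hIconn : I.OrdConnected)
    (hJconn : J.OrdConnected) {s t : ℝ → ℝ} (hmono : StrictMonoOn s I)
    (htmaps : MapsTo t J I) (htmono : StrictMonoOn t J) (hmaps : MapsTo s I J)
    (hts : ∀ x ∈ I, t (s x) = x) (hst : ∀ y ∈ J, s (t y) = y) {μ : Measure ℝ}
    (hμ : ∀ x ∈ I, ∀ y ∈ I, x ≤ y → μ (Ioc x y) = ENNReal.ofReal (s y - s x))
    {α β : ℝ} (hα : α ∈ J) (hβ : β ∈ J) (hαβ : α ≤ β) :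
    (volume.restrict (Ioc α β)).map t = μ.restrict (Ioc (t α) (t β)) := by
  have hsub : Ioc α β ⊆ J := Ioc_subset_Icc_self.trans (hJconn.out hα hβ)
  have htαβ : t α ≤ t β := htmono.monotoneOn hα hβ hαβ
  have htm : AEMeasurable t (volume.restrict (Ioc α β)) :=
    aemeasurable_restrict_of_monotoneOn measurableSet_Ioc (htmono.monotoneOn.mono hsub)
  have : IsFiniteMeasure (μ.restrict (Ioc (t α) (t β))) :=
    ⟨by simp [hμ _ (htmaps hα) _ (htmaps hβ) htαβ]⟩
  refine Measure.ext_of_Iic _ _ fun x => ?_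
  set c := max (t α) (min x (t β)) with hc
  have hcα : t α ≤ c := le_max_left _ _
  have hcβ : c ≤ t β := max_le htαβ (min_le_right _ _)
  have hcI : c ∈ I := hIconn.out (htmaps hα) (htmaps hβ) ⟨hcα, hcβ⟩
  have hscβ : s c ≤ β := hst β hβ ▸ hmono.monotoneOn hcI (htmaps hβ) hcβ
  have hiff : ∀ v, t α < v → v ≤ t β → (v ≤ x ↔ v ≤ c) := fun v hv hv' => by
    simp [hc, hv', not_le.2 hv]
  have hleft : t ⁻¹' Iic x ∩ Ioc α β = Ioc α (s c) := by
    ext u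
    have key : u ∈ Ioc α β → (t u ≤ x ↔ u ≤ s c) := fun hu => by
      rw [hiff _ (htmono hα (hsub hu) hu.1) (htmono.monotoneOn (hsub hu) hβ hu.2),
        ← htmono.le_iff_le (hsub hu) (hmaps hcI), hts c hcI]
    constructor
    · rintro ⟨h₁, h₂⟩
      exact ⟨h₂.1, (key h₂).1 h₁⟩
    · intro hu
      have hu' : u ∈ Ioc α β := ⟨hu.1, hu.2.trans hscβ⟩
      exact ⟨(key hu').2 hu.2, hu'⟩
  have hright : Iic x ∩ Ioc (t α) (t β) = Ioc (t α) c := by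
    ext v
    constructor
    · rintro ⟨h₁, h₂⟩
      exact ⟨h₂.1, (hiff v h₂.1 h₂.2).1 h₁⟩
    · intro hv
      exact ⟨(hiff v hv.1 (hv.2.trans hcβ)).2 hv.2, hv.1, hv.2.trans hcβ⟩
  rw [Measure.map_apply_of_aemeasurable htm measurableSet_Iic,
    Measure.restrict_apply' measurableSet_Ioc, Measure.restrict_apply measurableSet_Iic,
    hleft, hright, Real.volume_Ioc, hμ _ (htmaps hα) _ hcI hcα, hst α hα]

/-- If `h ≥ 0` is measurable with `∫_{I'} h² dμ < ∞` for all compact `I' ⊆ I`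
and `y − x = ∫_{(x,y]} h dμ` for all `x ≤ y` in `I`, then the inverse `t` of `s` is absolutely
continuous on `J` with density `h∘t`, and for every compact interval `K ⊆ J`,
`∫_K (h∘t)² dλ = ∫_{t(K)} h² dμ < ∞`. -/
theorem stmt4 (I J : Set ℝ) (hIopen : IsOpen I) (hIconn : I.OrdConnected)
    (hJopen : IsOpen J) (hJconn : J.OrdConnected)
    (s t : ℝ → ℝ) (hmono : StrictMonoOn s I) (hcont : ContinuousOn s I)
    (hmaps : Set.MapsTo s I J) (hsurj : Set.SurjOn s I J)
    (hts : ∀ x ∈ I, t (s x) = x) (hst : ∀ y ∈ J, s (t y) = y)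
    (μ : Measure ℝ) (hμI : μ Iᶜ = 0)
    (hμ : ∀ x ∈ I, ∀ y ∈ I, x ≤ y → μ (Set.Ioc x y) = ENNReal.ofReal (s y - s x))
    (h : ℝ → ℝ) (hmeas : Measurable h) (hpos : ∀ x, 0 ≤ h x)
    (hsq : ∀ I' ⊆ I, IsCompact I' → ∫⁻ x in I', ENNReal.ofReal ((h x) ^ 2) ∂μ < ⊤)
    (hrep : ∀ x ∈ I, ∀ y ∈ I, x ≤ y → y - x = ∫ u in Set.Ioc x y, h u ∂μ) :
    (∀ α ∈ J, ∀ β ∈ J, α ≤ β → t β - t α = ∫ u in α..β, h (t u)) ∧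
    (∀ a b : ℝ, Set.Icc a b ⊆ J →
      IntegrableOn (fun x => (h x) ^ 2) (t '' Set.Icc a b) μ ∧
      ∫ u in Set.Icc a b, (h (t u)) ^ 2 = ∫ x in t '' Set.Icc a b, (h x) ^ 2 ∂μ) := by
  have htmaps : MapsTo t J I := fun y hy => by
    obtain ⟨x, hx, rfl⟩ := hsurj hy
    rwa [hts x hx]
  have htmono : StrictMonoOn t J := fun u hu v hv huv => by
    rwa [← hmono.lt_iff_lt (htmaps hu) (htmaps hv), hst u hu, hst v hv]
  have hchange : ∀ α ∈ J, ∀ β ∈ J, α ≤ β → ∀ g : ℝ → ℝ, Measurable g →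
      ∫ u in Ioc α β, g (t u) = ∫ x in Ioc (t α) (t β), g x ∂μ := by
    intro α hα β hβ hαβ g hg
    rw [← map_restrict_Ioc_eq_restrict_Ioc hIconn hJconn hmono htmaps htmono hmaps hts hst hμ
      hα hβ hαβ, integral_map _ hg.aestronglyMeasurable]
    exact aemeasurable_restrict_of_monotoneOn measurableSet_Ioc
      (htmono.monotoneOn.mono (Ioc_subset_Icc_self.trans (hJconn.out hα hβ)))
  refine ⟨fun α hα β hβ hαβ => ?_, fun a b hab => ?_⟩
  · rw [intervalIntegral.integral_of_le hαβ, hchange α hα β hβ hαβ h hmeas]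
    exact hrep _ (htmaps hα) _ (htmaps hβ) (htmono.monotoneOn hα hβ hαβ)
  · rcases lt_or_ge b a with hlt | hle
    · simp [Icc_eq_empty_of_lt hlt]
    have ha : a ∈ J := hab (left_mem_Icc.2 hle)
    have hb : b ∈ J := hab (right_mem_Icc.2 hle)
    have hIcc : Icc (t a) (t b) ⊆ I := hIconn.out (htmaps ha) (htmaps hb)
    have himage : t '' Icc a b = Icc (t a) (t b) := by
      refine Subset.antisymm ?_ fun x hx => ⟨s x, ⟨?_, ?_⟩, hts x (hIcc hx)⟩
      · rintro _ ⟨u, hu, rfl⟩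
        exact ⟨htmono.monotoneOn ha (hab hu) hu.1, htmono.monotoneOn (hab hu) hb hu.2⟩
      · exact hst a ha ▸ hmono.monotoneOn (htmaps ha) (hIcc hx) hx.1
      · exact hst b hb ▸ hmono.monotoneOn (hIcc hx) (htmaps hb) hx.2
    rw [himage]
    refine ⟨⟨(hmeas.pow_const 2).aestronglyMeasurable, ?_⟩, ?_⟩
    · rw [hasFiniteIntegral_iff_ofReal (Filter.Eventually.of_forall fun x => sq_nonneg (h x))]
      exact hsq _ hIcc isCompact_Icc
    · rw [integral_Icc_eq_integral_Ioc, integral_Icc_eq_integral_Ioc'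
        (measure_singleton_eq_zero_of_Ioc hIopen hcont hμ (htmaps ha))]
      exact hchange a ha b hb hle (fun x => h x ^ 2) (hmeas.pow_const 2)
end

section
/- Let K ⊆ [0,1] be a compact set with empty interior and positive Lebesgue measure, and define t(x) := ∫_0^x dist(u, K) du for x ∈ ℝ. Then the image t(K) has Lebesgue measure zero; consequently, the inverse function s := t⁻¹ : ℝ → ℝ of the strictly increasing bijection t is not absolutely continuous, i.e., there is no locally integrable function g : ℝ → ℝ with s(y) − s(x) = ∫_x^y g(u) du for all x ≤ y. -/
open MeasureTheory Set

/-- A continuous monotone function with a continuous left inverse is surjective. -/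
theorem Monotone.surjective_of_continuous_leftInverse {t s : ℝ → ℝ} (ht : Continuous t)
    (hmono : Monotone t) (hs : Continuous s) (hst : Function.LeftInverse s t) :
    Function.Surjective t := by
  intro y
  obtain ⟨C, hC⟩ :=
    ((isCompact_uIcc (a := t 0) (b := y)).image hs).isBounded.exists_norm_le
  have hbound : ∀ x, t x ∈ uIcc (t 0) y → |x| ≤ C := fun x hx => by
    simpa [hst x] using hC (s (t x)) (mem_image_of_mem s hx)
  have hC0 : 0 ≤ C := by simpa using hbound 0 left_mem_uIcc
  have hupper : y ≤ t (C + 1) := by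
    by_contra! h
    have := (le_abs_self _).trans
      (hbound (C + 1) (mem_uIcc.2 (Or.inl ⟨hmono (by linarith), h.le⟩)))
    linarith
  have hlower : t (-(C + 1)) ≤ y := by
    by_contra! h
    have := (neg_le_abs _).trans
      (hbound (-(C + 1)) (mem_uIcc.2 (Or.inr ⟨h.le, hmono (by linarith)⟩)))
    linarith
  exact mem_range_of_exists_le_of_exists_ge ht ⟨_, hlower⟩ ⟨_, hupper⟩

/-- A set whose image under `t` is null is itself null, if `t` is continuous and monotone with an
absolutely continuous left inverse. -/
theorem volume_eq_zero_of_image_of_leftInverse {t s g : ℝ → ℝ} (ht : Continuous t)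
    (hmono : Monotone t) (hst : Function.LeftInverse s t) (hg : LocallyIntegrable g volume)
    (hsg : ∀ x y : ℝ, x ≤ y → s y - s x = ∫ u in x..y, g u) {K : Set ℝ}
    (hK : volume (t '' K) = 0) : volume K = 0 := by
  have hint : ∀ a b, IntervalIntegrable g volume a b := fun a b =>
    (hg.integrableOn_isCompact isCompact_uIcc).intervalIntegrable
  have hs : Continuous s := by
    have h : s = fun y => s 0 + ∫ u in (0 : ℝ)..y, g u := by
      funext y
      rcases le_total 0 y with h | h
      · rw [← hsg 0 y h]; ring
      · rw [intervalIntegral.integral_symm, ← hsg y 0 h]; ring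
    rw [h]
    exact continuous_const.add (intervalIntegral.continuous_primitive hint 0)
  have hsurj := hmono.surjective_of_continuous_leftInverse ht hs hst
  have hstrict : StrictMono t := hmono.strictMono_of_injective hst.injective
  set pos := volume.withDensity fun x => ENNReal.ofReal (g x)
  set neg := volume.withDensity fun x => ENNReal.ofReal (-g x)
  have hpre : ∀ x y, t ⁻¹' Ioc (t x) (t y) = Ioc x y := fun x y => by
    ext z; simp [hstrict.lt_iff_lt, hstrict.le_iff_le]
  have hIoc : ∀ x y, (volume.map t) (Ioc (t x) (t y)) = ENNReal.ofReal (y - x) := fun x y => by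
    rw [Measure.map_apply ht.measurable measurableSet_Ioc, hpre, Real.volume_Ioc]
  have hpos_top : ∀ p q, pos (Ioc p q) ≠ ⊤ := fun p q => by
    rw [withDensity_apply _ measurableSet_Ioc]
    exact ((hint p q).1.lintegral_lt_top).ne
  have hneg_top : ∀ p q, neg (Ioc p q) ≠ ⊤ := fun p q => by
    rw [withDensity_apply _ measurableSet_Ioc]
    exact ((hint p q).1.neg.lintegral_lt_top).ne
  have key : volume.map t + neg = pos := by
    refine Measure.ext_of_Ioc' _ _ (fun p q _ => ?_) (fun p q hpq => ?_)
    · obtain ⟨x, rfl⟩ := hsurj p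
      obtain ⟨y, rfl⟩ := hsurj q
      rw [Measure.add_apply, hIoc]
      exact ENNReal.add_ne_top.2 ⟨ENNReal.ofReal_ne_top, hneg_top _ _⟩
    · obtain ⟨x, rfl⟩ := hsurj p
      obtain ⟨y, rfl⟩ := hsurj q
      have hxy : x ≤ y := (hstrict.lt_iff_lt.1 hpq).le
      have h := hsg _ _ hpq.le
      rw [hst, hst, intervalIntegral.integral_of_le hpq.le,
        integral_eq_lintegral_pos_part_sub_lintegral_neg_part (hint _ _).1,
        ← withDensity_apply _ measurableSet_Ioc, ← withDensity_apply _ measurableSet_Ioc] at h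
      rw [Measure.add_apply, hIoc, ← ENNReal.toReal_eq_toReal_iff'
        (ENNReal.add_ne_top.2 ⟨ENNReal.ofReal_ne_top, hneg_top _ _⟩) (hpos_top _ _),
        ENNReal.toReal_add ENNReal.ofReal_ne_top (hneg_top _ _),
        ENNReal.toReal_ofReal (sub_nonneg.2 hxy)]
      linarith
  have hmap : volume.map t (t '' K) = 0 := by
    have h : (volume.map t + neg) (t '' K) = 0 := by
      rw [key]
      exact withDensity_absolutelyContinuous _ _ hK
    exact (add_eq_zero.1 (by simpa only [Measure.add_apply] using h)).1
  exact measure_mono_null (subset_preimage_image t K)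
    (Measure.preimage_null_of_map_null ht.aemeasurable hmap)

/-- For a compact `K ⊆ [0,1]` with empty interior and positive Lebesgue measure
and `t(x) := ∫_0^x dist(u,K) du`, the image `t(K)` has Lebesgue measure zero; consequently
the inverse `s = t⁻¹` of the strictly increasing bijection `t` is not absolutely continuous:
there is no locally integrable `g` with `s(y) − s(x) = ∫_x^y g(u) du` for all `x ≤ y`. -/
theorem stmt9 (K : Set ℝ) (hK : IsCompact K) (hKsub : K ⊆ Set.Icc 0 1)
    (hKint : interior K = ∅) (hKpos : 0 < volume K) :
    volume ((fun x => ∫ u in (0:ℝ)..x, Metric.infDist u K) '' K) = 0 ∧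
    ∀ s : ℝ → ℝ, (∀ x : ℝ, s (∫ u in (0:ℝ)..x, Metric.infDist u K) = x) →
      ¬ ∃ g : ℝ → ℝ, LocallyIntegrable g volume ∧
        ∀ x y : ℝ, x ≤ y → s y - s x = ∫ u in x..y, g u := by
  have hcont : Continuous fun u => Metric.infDist u K := Metric.continuous_infDist_pt K
  have hderiv (x : ℝ) : HasDerivAt (fun x => ∫ u in (0:ℝ)..x, Metric.infDist u K)
      (Metric.infDist x K) x := hcont.integral_hasStrictDerivAt 0 x |>.hasDerivAt
  have himage : volume ((fun x => ∫ u in (0:ℝ)..x, Metric.infDist u K) '' K) = 0 := by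
    refine addHaar_image_eq_zero_of_det_fderivWithin_eq_zero volume
      (fun x _ => (hderiv x).hasFDerivAt.hasFDerivWithinAt) fun x hx => ?_
    simp [Metric.infDist_zero_of_mem hx, ContinuousLinearMap.det]
  refine ⟨himage, ?_⟩
  rintro s hst ⟨g, hg, hsg⟩
  have ht : Differentiable ℝ fun x => ∫ u in (0:ℝ)..x, Metric.infDist u K :=
    fun x => (hderiv x).differentiableAt
  have hmono : Monotone fun x => ∫ u in (0:ℝ)..x, Metric.infDist u K :=
    monotone_of_deriv_nonneg ht fun x => (hderiv x).deriv ▸ Metric.infDist_nonneg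
  exact hKpos.ne' (volume_eq_zero_of_image_of_leftInverse ht.continuous hmono hst hg hsg himage)
end

section
/- Let Z ⊆ ℝ be a measurable set with λ(Z) > 0 such that λ((a,b) ∖ Z) > 0 for every a < b. Then there is no function F : ℝ → ℝ of locally bounded variation such that F(x) = 1 for almost every x ∈ ℝ ∖ Z and F(x) = 0 for almost every x ∈ Z; in other words, no locally bounded variation function agrees almost everywhere with the indicator function of ℝ ∖ Z. -/
open MeasureTheory Set

/-- If `Z ⊆ ℝ` is measurable with positive Lebesgue measure and the complement
of `Z` has positive measure in every nonempty open interval, then no function of locally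
bounded variation agrees almost everywhere with the indicator of `ℝ ∖ Z` (i.e. equals `1`
a.e. on `ℝ ∖ Z` and `0` a.e. on `Z`). -/
theorem stmt10 (Z : Set ℝ) (hZm : MeasurableSet Z) (hZpos : 0 < volume Z)
    (hdense : ∀ a b : ℝ, a < b → 0 < volume (Set.Ioo a b \ Z)) :
    ¬ ∃ F : ℝ → ℝ, (∀ a b : ℝ, BoundedVariationOn F (Set.Icc a b)) ∧
      (∀ᵐ x ∂(volume.restrict Zᶜ), F x = 1) ∧
      (∀ᵐ x ∂(volume.restrict Z), F x = 0) := by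
  rintro ⟨F, hbv, hone, hzero⟩
  have hlbv : LocallyBoundedVariationOn F univ := fun a b _ _ => by
    simpa using hbv a b
  rw [ae_restrict_iff' hZm] at hzero
  rw [ae_restrict_iff' hZm.compl] at hone
  obtain ⟨x, hFx, hdiff⟩ : ∃ x, F x = 0 ∧ DifferentiableAt ℝ F x := by
    have hfreq : ∃ᵐ x ∂volume, x ∈ Z := frequently_ae_mem_iff.2 hZpos.ne'
    obtain ⟨x, hx, hx0, hxd⟩ :=
      (hfreq.and_eventually (hzero.and hlbv.ae_differentiableAt)).exists
    exact ⟨x, hx0 hx, hxd⟩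
  have hlt : ∀ᶠ y in nhds x, F y < 1 :=
    hdiff.continuousAt.eventually_lt continuousAt_const (by simp [hFx])
  obtain ⟨a, b, ⟨hax, hxb⟩, hab⟩ := mem_nhds_iff_exists_Ioo_subset.1 hlt
  have hfreq : ∃ᵐ y ∂volume, y ∈ Ioo a b \ Z :=
    frequently_ae_mem_iff.2 (hdense a b (hax.trans hxb)).ne'
  obtain ⟨y, ⟨hyab, hyZ⟩, hy1⟩ := (hfreq.and_eventually hone).exists
  exact (hab hyab).ne (hy1 hyZ)
end

section
/- Let c : ℝ → ℝ be a nondecreasing, continuous, bounded function whose Stieltjes measure ν (determined by ν((x,y]) = c(y) − c(x)) is mutually singular with Lebesgue measure λ. Set s(x) := x + c(x), so that s : ℝ → ℝ is a strictly increasing continuous bijection, and let t := s⁻¹. Then t is 1-Lipschitz; t is absolutely continuous with a density g taking only the values 0 and 1 almost everywhere; and λ({y ∈ ℝ : g(y) = 0}) = ν(ℝ) for any such density g. -/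
open MeasureTheory Set

/-- Two locally integrable functions on `ℝ` which are densities of the same function agree
almost everywhere. -/
theorem ae_eq_of_forall_sub_eq_intervalIntegral {t f g : ℝ → ℝ}
    (hf : LocallyIntegrable f volume) (hg : LocallyIntegrable g volume)
    (hft : ∀ x y : ℝ, x ≤ y → t y - t x = ∫ u in x..y, f u)
    (hgt : ∀ x y : ℝ, x ≤ y → t y - t x = ∫ u in x..y, g u) :
    f =ᵐ[volume] g := by
  filter_upwards [LocallyIntegrable.ae_hasDerivAt_integral hf,
    LocallyIntegrable.ae_hasDerivAt_integral hg] with x hfx hgx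
  have heq : (fun y => ∫ u in (0 : ℝ)..y, f u) = fun y => ∫ u in (0 : ℝ)..y, g u := by
    funext y
    rcases le_total 0 y with hy | hy
    · rw [← hft 0 y hy, ← hgt 0 y hy]
    · rw [intervalIntegral.integral_symm, intervalIntegral.integral_symm y 0, ← hft y 0 hy,
        ← hgt y 0 hy]
  exact (hfx 0).unique (heq ▸ hgx 0)

section InverseOfIdAdd

variable {c t : ℝ → ℝ}

theorem strictMono_of_add_comp_eq (hmono : Monotone c) (hst : ∀ y : ℝ, t y + c (t y) = y) :
    StrictMono t := by
  intro x y hxy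
  by_contra! h
  linarith [hst x, hst y, hmono h]

theorem lipschitzWith_one_of_add_comp_eq (hmono : Monotone c)
    (hst : ∀ y : ℝ, t y + c (t y) = y) : LipschitzWith 1 t := by
  have hlt := strictMono_of_add_comp_eq hmono hst
  refine LipschitzWith.of_le_add fun x y => ?_
  rcases le_total x y with h | h
  · linarith [hlt.monotone h, dist_nonneg (x := x) (y := y)]
  · rw [Real.dist_eq, abs_of_nonneg (sub_nonneg.2 h)]
    linarith [hst x, hst y, hmono (hlt.monotone h)]

/-- The image of Lebesgue measure under the inverse of `x ↦ x + c x` is the sum of Lebesgue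
measure and the Stieltjes measure of `c`. -/
theorem map_volume_eq_volume_add (hmono : Monotone c) {ν : Measure ℝ}
    (hν : ∀ x y : ℝ, x ≤ y → ν (Ioc x y) = ENNReal.ofReal (c y - c x))
    (hts : ∀ x : ℝ, t (x + c x) = x) (hst : ∀ y : ℝ, t y + c (t y) = y) :
    Measure.map t volume = volume + ν := by
  have hlt := strictMono_of_add_comp_eq hmono hst
  have hIoc : ∀ a b : ℝ, a < b →
      Measure.map t volume (Ioc a b) = ENNReal.ofReal (b - a + (c b - c a)) := by
    intro a b _
    have hpre : t ⁻¹' Ioc a b = Ioc (a + c a) (b + c b) := by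
      ext y
      simp only [mem_preimage, mem_Ioc]
      rw [← hlt.lt_iff_lt (a := a + c a), ← hlt.le_iff_le (b := b + c b), hts, hts]
    rw [Measure.map_apply hlt.monotone.measurable measurableSet_Ioc, hpre, Real.volume_Ioc]
    congr 1
    ring
  refine Measure.ext_of_Ioc' _ _ (fun a b hab => ?_) fun a b hab => ?_
  · rw [hIoc a b hab]
    exact ENNReal.ofReal_ne_top
  · rw [hIoc a b hab, Measure.add_apply, hν a b hab.le, Real.volume_Ioc,
      ENNReal.ofReal_add (sub_nonneg.2 hab.le) (sub_nonneg.2 (hmono hab.le))]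

/-- If Lebesgue measure is carried by `S` and the Stieltjes measure of `c` does not charge `S`,
then the indicator of `t ⁻¹' S` is a density of `t`. -/
theorem sub_eq_intervalIntegral_indicator (hmono : Monotone c) {ν : Measure ℝ}
    (hν : ∀ x y : ℝ, x ≤ y → ν (Ioc x y) = ENNReal.ofReal (c y - c x))
    (hts : ∀ x : ℝ, t (x + c x) = x) (hst : ∀ y : ℝ, t y + c (t y) = y)
    {S : Set ℝ} (hS : MeasurableSet S) (hνS : ν S = 0) (hSc : volume Sᶜ = 0)
    {x y : ℝ} (hxy : x ≤ y) :
    t y - t x = ∫ u in x..y, (t ⁻¹' S).indicator (fun _ => (1 : ℝ)) u := by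
  have hlt := strictMono_of_add_comp_eq hmono hst
  have hmeas : Measurable t := hlt.monotone.measurable
  have hpre : t ⁻¹' S ∩ Ioc x y = t ⁻¹' (S ∩ Ioc (t x) (t y)) := by
    ext u
    simp [hlt.lt_iff_lt, hlt.le_iff_le]
  have hvol : volume (S ∩ Ioc (t x) (t y)) = volume (Ioc (t x) (t y)) := by
    rw [inter_comm]
    exact measure_inter_conull hSc
  rw [intervalIntegral.integral_of_le hxy, integral_indicator_const _ (hmeas hS),
    measureReal_restrict_apply (hmeas hS), hpre, measureReal_def,
    ← Measure.map_apply hmeas (hS.inter measurableSet_Ioc),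
    map_volume_eq_volume_add hmono hν hts hst, Measure.add_apply, hvol,
    measure_mono_null inter_subset_left hνS, add_zero, Real.volume_Ioc,
    ENNReal.toReal_ofReal (sub_nonneg.2 (hlt.monotone hxy)), smul_eq_mul, mul_one]

end InverseOfIdAdd

/-- Let `c` be nondecreasing, continuous and bounded with Stieltjes measure `ν`
singular with respect to Lebesgue measure, `s(x) = x + c(x)` and `t = s⁻¹`. Then `t` is
1-Lipschitz; `t` is absolutely continuous with a density taking only the values 0 and 1
almost everywhere; and `λ({g = 0}) = ν(ℝ)` for any density `g` of `t`. -/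
theorem stmt11 (c : ℝ → ℝ) (hmono : Monotone c) (hcont : Continuous c)
    (hbdd : ∃ M : ℝ, ∀ x, |c x| ≤ M)
    (ν : Measure ℝ)
    (hν : ∀ x y : ℝ, x ≤ y → ν (Set.Ioc x y) = ENNReal.ofReal (c y - c x))
    (hsing : ν.MutuallySingular volume)
    (t : ℝ → ℝ) (hts : ∀ x : ℝ, t (x + c x) = x) (hst : ∀ y : ℝ, t y + c (t y) = y) :
    LipschitzWith 1 t ∧
    (∃ g : ℝ → ℝ, LocallyIntegrable g volume ∧
      (∀ x y : ℝ, x ≤ y → t y - t x = ∫ u in x..y, g u) ∧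
      (∀ᵐ y : ℝ, g y = 0 ∨ g y = 1)) ∧
    (∀ g : ℝ → ℝ, LocallyIntegrable g volume →
      (∀ x y : ℝ, x ≤ y → t y - t x = ∫ u in x..y, g u) →
      volume {y : ℝ | g y = 0} = ν Set.univ) := by
  have hmeas : Measurable t := (strictMono_of_add_comp_eq hmono hst).monotone.measurable
  obtain ⟨S, hS, hνS, hSc⟩ := hsing
  have hint : LocallyIntegrable ((t ⁻¹' S).indicator fun _ => (1 : ℝ)) volume :=
    (locallyIntegrable_const 1).indicator (hmeas hS)
  have hdens : ∀ x y : ℝ, x ≤ y →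
      t y - t x = ∫ u in x..y, (t ⁻¹' S).indicator (fun _ => (1 : ℝ)) u := fun x y hxy =>
    sub_eq_intervalIntegral_indicator hmono hν hts hst hS hνS hSc hxy
  refine ⟨lipschitzWith_one_of_add_comp_eq hmono hst, ⟨_, hint, hdens,
    ae_of_all _ fun y => indicator_eq_zero_or_self _ _ y⟩, fun g hg hgt => ?_⟩
  have hae := ae_eq_of_forall_sub_eq_intervalIntegral hg hint hgt hdens
  have hzero : {y : ℝ | g y = 0} =ᵐ[volume] t ⁻¹' Sᶜ := by
    refine Filter.eventuallyEq_set.2 ?_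
    filter_upwards [hae] with y hy
    simp [hy]
  rw [measure_congr hzero, ← Measure.map_apply hmeas hS.compl,
    map_volume_eq_volume_add hmono hν hts hst, Measure.add_apply, hSc, zero_add,
    ← measure_add_measure_compl hS, hνS, zero_add]
end

section
/- Let c : ℝ → ℝ be a nondecreasing, continuous, bounded function whose Stieltjes measure ν is mutually singular with Lebesgue measure λ, set s(x) := x + c(x) and t := s⁻¹, and let g be any density of the absolutely continuous function t (so t(y) − t(x) = ∫_x^y g(u) du for all x ≤ y). Then for every a < b one has λ((a,b) ∩ {y : g(y) ≠ 0}) ≥ t(b) − t(a) > 0; in particular, the set where every density of t is nonzero meets every nonempty open interval in a set of positive Lebesgue measure. -/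
open MeasureTheory Set

/-- A density of a Lipschitz function is bounded almost everywhere by the Lipschitz constant. -/
theorem MeasureTheory.LocallyIntegrable.ae_norm_le_of_lipschitzWith {g t : ℝ → ℝ} {K : NNReal}
    (hg : LocallyIntegrable g volume) (ht : LipschitzWith K t)
    (hdens : ∀ x y : ℝ, x ≤ y → t y - t x = ∫ u in x..y, g u) :
    ∀ᵐ y, ‖g y‖ ≤ K := by
  have hprim : (fun y ↦ ∫ u in (0 : ℝ)..y, g u) = fun y ↦ t y - t 0 := by
    funext y
    rcases le_total 0 y with h | h
    · exact (hdens 0 y h).symm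
    · rw [intervalIntegral.integral_symm, ← hdens y 0 h, neg_sub]
  filter_upwards [LocallyIntegrable.ae_hasDerivAt_integral hg] with y hy
  have hderiv := hy 0
  rw [hprim] at hderiv
  exact ((hasDerivAt_sub_const_iff (t 0)).1 hderiv).le_of_lipschitz ht

/-- If `|g| ≤ 1` almost everywhere, the integral of `g` over an interval is at most the measure of
the part of the interval where `g` does not vanish. -/
theorem ofReal_intervalIntegral_le_volume_support {g : ℝ → ℝ} {a b : ℝ} (hab : a ≤ b)
    (hg : ∀ᵐ y, ‖g y‖ ≤ 1) :
    ENNReal.ofReal (∫ u in a..b, g u) ≤ volume (Ioo a b ∩ {y | g y ≠ 0}) := by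
  rw [intervalIntegral.integral_of_le hab, integral_Ioc_eq_integral_Ioo]
  calc ENNReal.ofReal (∫ u in Ioo a b, g u)
      ≤ ‖∫ u in Ioo a b, g u‖ₑ := Real.ofReal_le_enorm _
    _ ≤ ∫⁻ u in Ioo a b, ‖g u‖ₑ := enorm_integral_le_lintegral_enorm _
    _ ≤ ∫⁻ u in Ioo a b, {y | g y ≠ 0}.indicator 1 u := by
        refine lintegral_mono_ae (ae_restrict_of_ae ?_)
        filter_upwards [hg] with u hu
        by_cases h : g u = 0
        · simp [h]
        · rw [indicator_of_mem h, Pi.one_apply, ← ofReal_norm]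
          exact ENNReal.ofReal_le_one.2 hu
    _ ≤ volume.restrict (Ioo a b) {y | g y ≠ 0} := lintegral_indicator_one_le _
    _ = volume (Ioo a b ∩ {y | g y ≠ 0}) := by
        rw [Measure.restrict_apply' measurableSet_Ioo, inter_comm]

/-- With `c` nondecreasing, continuous, bounded, `ν ⊥ λ` its Stieltjes measure,
`s(x) = x + c(x)`, `t = s⁻¹`, and `g` any density of the absolutely continuous `t`: for every
`a < b`, `λ((a,b) ∩ {g ≠ 0}) ≥ t(b) − t(a) > 0`. -/
theorem stmt12 (c : ℝ → ℝ) (hmono : Monotone c) (hcont : Continuous c)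
    (hbdd : ∃ M : ℝ, ∀ x, |c x| ≤ M)
    (ν : Measure ℝ)
    (hν : ∀ x y : ℝ, x ≤ y → ν (Set.Ioc x y) = ENNReal.ofReal (c y - c x))
    (hsing : ν.MutuallySingular volume)
    (t : ℝ → ℝ) (hts : ∀ x : ℝ, t (x + c x) = x) (hst : ∀ y : ℝ, t y + c (t y) = y) :
    ∀ g : ℝ → ℝ, LocallyIntegrable g volume →
      (∀ x y : ℝ, x ≤ y → t y - t x = ∫ u in x..y, g u) →
      ∀ a b : ℝ, a < b →
        0 < t b - t a ∧
        ENNReal.ofReal (t b - t a) ≤ volume (Set.Ioo a b ∩ {y : ℝ | g y ≠ 0}) := by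
  intro g hg hdens a b hab
  have hinc : ∀ x y, x < y → t x < t y := fun x y hxy ↦ by
    by_contra! h
    linarith [hmono h, hst x, hst y]
  have hlip : LipschitzWith 1 t := LipschitzWith.of_le_add fun x y ↦ by
    rcases lt_or_ge y x with h | h
    · have := hmono (hinc y x h).le
      linarith [hst x, hst y, le_abs_self (x - y), Real.dist_eq x y]
    · have hxy : t x ≤ t y := h.eq_or_lt.elim (fun e ↦ e ▸ le_rfl) fun h ↦ (hinc x y h).le
      linarith [dist_nonneg (x := x) (y := y)]
  have hbound := hg.ae_norm_le_of_lipschitzWith hlip hdens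
  refine ⟨sub_pos.2 (hinc a b hab), ?_⟩
  rw [hdens a b hab.le]
  exact ofReal_intervalIntegral_le_volume_support hab.le (by simpa using hbound)
end

section
/- Let c : ℝ → ℝ be a nondecreasing, continuous, bounded, non-constant function whose Stieltjes measure ν is mutually singular with Lebesgue measure λ, set s(x) := x + c(x) and t := s⁻¹. Then no density g of the absolutely continuous function t (i.e., no locally integrable g with t(y) − t(x) = ∫_x^y g(u) du for all x ≤ y) agrees Lebesgue-almost everywhere with a function of locally bounded variation on ℝ. -/
open MeasureTheory Set

/-- A continuous nondecreasing function whose Stieltjes measure is singular has derivative zero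
Lebesgue-almost everywhere. -/
lemma Monotone.ae_hasDerivAt_zero_of_mutuallySingular {c : ℝ → ℝ} (hmono : Monotone c)
    (hcont : Continuous c) {ν : Measure ℝ}
    (hν : ∀ x y : ℝ, x ≤ y → ν (Ioc x y) = ENNReal.ofReal (c y - c x))
    (hsing : ν.MutuallySingular volume) : ∀ᵐ x : ℝ, HasDerivAt c 0 x := by
  let f : StieltjesFunction ℝ := ⟨c, hmono, fun x => hcont.continuousWithinAt⟩
  have hf : f.measure = ν := Measure.ext_of_Ioc _ _ fun a b hab => by
    rw [f.measure_Ioc, hν a b hab.le]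
  have hzero : f.measure.rnDeriv volume =ᵐ[volume] 0 :=
    (Measure.rnDeriv_eq_zero _ _).2 (hf ▸ hsing)
  filter_upwards [f.ae_hasDerivAt, hzero] with x hx hx0
  simpa [hx0] using hx

/-- An antiderivative of a locally integrable function `g` is nearly affine of slope `L` to the
right of a point where a version `F` of `g` has right limit `L`. -/
lemma exists_abs_sub_sub_mul_le_of_tendsto_nhdsGT {t g F : ℝ → ℝ}
    (hg : LocallyIntegrable g volume)
    (ht : ∀ x y : ℝ, x ≤ y → t y - t x = ∫ u in x..y, g u) (hgF : ∀ᵐ u : ℝ, g u = F u)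
    {y L : ℝ} (hL : Filter.Tendsto F (nhdsWithin y (Ioi y)) (nhds L)) {ε : ℝ} (hε : 0 < ε) :
    ∃ r > y, ∀ a b : ℝ, y ≤ a → a ≤ b → b < r → |t b - t a - L * (b - a)| ≤ ε * (b - a) := by
  have hev := hL.eventually (Metric.ball_mem_nhds L hε)
  obtain ⟨r, hr, hrF⟩ := mem_nhdsGT_iff_exists_Ioo_subset.1 hev
  refine ⟨r, hr, fun a b hya hab hbr => ?_⟩
  have hint : IntervalIntegrable g volume a b :=
    (hg.integrableOn_isCompact isCompact_uIcc).intervalIntegrable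
  have heq : t b - t a - L * (b - a) = ∫ u in a..b, (g u - L) := by
    rw [ht a b hab, intervalIntegral.integral_sub hint (by simp)]
    simp [mul_comm]
  have hle := intervalIntegral.norm_integral_le_of_norm_le_const_ae
    (a := a) (b := b) (C := ε) (f := fun u => g u - L) <| by
      filter_upwards [hgF] with u hu hmem
      rw [uIoc_of_le hab] at hmem
      have := hrF ⟨hya.trans_lt hmem.1, hmem.2.trans_lt hbr⟩
      rw [hu]
      exact (mem_ball_iff_norm.1 this).le
  rwa [heq, ← Real.norm_eq_abs, ← abs_of_nonneg (sub_nonneg.2 hab)]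

/-- With `c` nondecreasing, continuous, bounded, non-constant, `ν ⊥ λ` its
Stieltjes measure, `s(x) = x + c(x)` and `t = s⁻¹`: no density `g` of the absolutely
continuous function `t` agrees Lebesgue-almost everywhere with a function of locally bounded
variation on `ℝ`. -/
theorem stmt13 (c : ℝ → ℝ) (hmono : Monotone c) (hcont : Continuous c)
    (hbdd : ∃ M : ℝ, ∀ x, |c x| ≤ M) (hnc : ∃ x y : ℝ, c x ≠ c y)
    (ν : Measure ℝ)
    (hν : ∀ x y : ℝ, x ≤ y → ν (Set.Ioc x y) = ENNReal.ofReal (c y - c x))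
    (hsing : ν.MutuallySingular volume)
    (t : ℝ → ℝ) (hts : ∀ x : ℝ, t (x + c x) = x) (hst : ∀ y : ℝ, t y + c (t y) = y) :
    ∀ g : ℝ → ℝ, LocallyIntegrable g volume →
      (∀ x y : ℝ, x ≤ y → t y - t x = ∫ u in x..y, g u) →
      ¬ ∃ F : ℝ → ℝ, (∀ a b : ℝ, BoundedVariationOn F (Set.Icc a b)) ∧
        ∀ᵐ y : ℝ, g y = F y := by
  rintro g hg ht ⟨F, hBV, hgF⟩
  have hlip : ∀ x y, x ≤ y → t x ≤ t y ∧ t y - t x ≤ y - x := fun x y hxy => by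
    have hx := hst x
    have hy := hst y
    rcases le_total (t x) (t y) with h | h <;> have := hmono h <;> constructor <;> linarith
  have htcont : Continuous t := by
    refine (LipschitzWith.of_le_add fun x y => ?_).continuous
    rw [Real.dist_eq]
    rcases le_total x y with h | h
    · linarith [(hlip x y h).1, abs_nonneg (x - y)]
    · linarith [(hlip y x h).2, le_abs_self (x - y)]
  have hdense : Dense {z | HasDerivAt t 1 z} := by
    have himage := (Function.Surjective.denseRange fun y => ⟨t y, hst y⟩).dense_image
      (continuous_id.add hcont)
      (Measure.dense_of_ae (hmono.ae_hasDerivAt_zero_of_mutuallySingular hcont hν hsing))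
    refine himage.mono ?_
    rintro _ ⟨x, hx, rfl⟩
    have hderiv : HasDerivAt (fun x => x + c x) 1 (t (x + c x)) := by
      simpa [hts x] using (hasDerivAt_id' x).fun_add hx
    simpa using HasDerivAt.of_local_left_inverse htcont.continuousAt hderiv one_ne_zero
      (Filter.Eventually.of_forall hst)
  have hright : ∀ y, Filter.Tendsto F (nhdsWithin y (Ioi y)) (nhds 1) := fun y => by
    obtain ⟨L, hL⟩ := (hBV y (y + 1)).exists_tendsto_right y
    have hnhds : nhdsWithin y (Icc y (y + 1) ∩ Ioi y) = nhdsWithin y (Ioi y) := by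
      rw [← nhdsWithin_Ioc_eq_nhdsGT (show y < y + 1 by linarith)]
      congr 1
      ext u
      simp only [mem_inter_iff, mem_Icc, mem_Ioi, mem_Ioc]
      exact ⟨fun h => ⟨h.2, h.1.2⟩, fun h => ⟨⟨h.1.le, h.2⟩, h.1⟩⟩
    rw [hnhds] at hL
    suffices h : |1 - L| ≤ 0 by
      rwa [← sub_eq_zero.1 (abs_nonpos_iff.1 h)] at hL
    refine le_of_forall_pos_le_add fun ε hε => ?_
    obtain ⟨r, hr, hbound⟩ := exists_abs_sub_sub_mul_le_of_tendsto_nhdsGT hg ht hgF hL hε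
    obtain ⟨z, hz, hzr⟩ := hdense.exists_between hr
    have hd : HasDerivAt (fun u => t u - L * u) (1 - L) z := by
      simpa using hz.fun_sub ((hasDerivAt_id' z).const_mul L)
    rw [zero_add, ← Real.norm_eq_abs]
    refine hd.le_of_lip' hε.le ?_
    filter_upwards [Ioo_mem_nhds hzr.1 hzr.2] with u hu
    simp only [Real.norm_eq_abs]
    rcases le_total z u with h | h
    · rw [abs_of_nonneg (sub_nonneg.2 h)]
      convert hbound z u hzr.1.le h hu.2 using 2
      ring
    · rw [abs_sub_comm, abs_sub_comm u z, abs_of_nonneg (sub_nonneg.2 h)]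
      convert hbound u z hu.1.le h hzr.2 using 2
      ring
  have hderiv : ∀ y, HasDerivWithinAt (fun u => c (t u)) 0 (Ici y) y := fun y => by
    rw [hasDerivWithinAt_iff_isLittleO, Asymptotics.isLittleO_iff]
    intro ε hε
    obtain ⟨r, hr, hbound⟩ :=
      exists_abs_sub_sub_mul_le_of_tendsto_nhdsGT hg ht hgF (hright y) hε
    filter_upwards [Ico_mem_nhdsGE hr] with u hu
    have := hbound y u le_rfl hu.1 hu.2
    rw [smul_zero, sub_zero, Real.norm_eq_abs, Real.norm_eq_abs,
      abs_of_nonneg (sub_nonneg.2 hu.1), abs_sub_comm]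
    convert this using 2
    linarith [hst u, hst y]
  have hconst : ∀ a b, a ≤ b → c (t b) = c (t a) := fun a b hab =>
    constant_of_has_deriv_right_zero (hcont.comp htcont).continuousOn (fun y _ => hderiv y)
      b (right_mem_Icc.2 hab)
  obtain ⟨x, y, hxy⟩ := hnc
  apply hxy
  rw [← hts x, ← hts y]
  rcases le_total (x + c x) (y + c y) with h | h
  · exact (hconst _ _ h).symm
  · exact hconst _ _ h
end

section
/- Let b : ℝ → ℝ be measurable with ∫_K b(z)² dz < ∞ for every compact K ⊆ ℝ. Set B(y) := ∫_0^y b(z) dz, s(x) := ∫_0^x exp(−2B(y)) dy, J := s(ℝ), and let t : J → ℝ be the inverse of s. Then t is continuously differentiable on J with t'(u) = exp(2B(t(u))) > 0 for all u ∈ J; t' is absolutely continuous on every compact subinterval of J with almost-everywhere derivative t''(u) = 2 b(t(u)) t'(u)²; and for every compact interval K ⊆ J one has ∫_K t''(u)² / t'(u)³ du = 4 ∫_{t(K)} b(x)² dx. -/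
open MeasureTheory Set Filter

/-- Postcomposing an absolutely continuous function with a function that is Lipschitz on its image
gives an absolutely continuous function. -/
theorem LipschitzOnWith.comp_absolutelyContinuousOnInterval
    {X Y : Type*} [PseudoMetricSpace X] [PseudoMetricSpace Y] {f : ℝ → X} {g : X → Y}
    {C : NNReal} {a b : ℝ} (hg : LipschitzOnWith C g (f '' uIcc a b))
    (hf : AbsolutelyContinuousOnInterval f a b) :
    AbsolutelyContinuousOnInterval (g ∘ f) a b := by
  have hlim := Tendsto.const_mul (C : ℝ) hf
  rw [mul_zero] at hlim
  refine squeeze_zero' (Eventually.of_forall fun E => Finset.sum_nonneg fun i _ => dist_nonneg)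
    ?_ hlim
  filter_upwards [mem_inf_of_right (mem_principal_self _)] with E hE
  rw [Finset.mul_sum]
  exact Finset.sum_le_sum fun i hi => hg.dist_le_mul _ (mem_image_of_mem f (hE.1 i hi).1) _
    (mem_image_of_mem f (hE.1 i hi).2)

/-- Postcomposing a real absolutely continuous function with a `C¹` function gives an absolutely
continuous function. -/
theorem ContDiff.comp_absolutelyContinuousOnInterval {f g : ℝ → ℝ} {a b : ℝ}
    (hg : ContDiff ℝ 1 g) (hf : AbsolutelyContinuousOnInterval f a b) :
    AbsolutelyContinuousOnInterval (g ∘ f) a b := by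
  obtain ⟨C, hC⟩ := hg.locallyLipschitz.locallyLipschitzOn.exists_lipschitzOnWith_of_compact
    (isCompact_uIcc.image_of_continuousOn hf.continuousOn)
  exact hC.comp_absolutelyContinuousOnInterval hf

/-- The fundamental theorem of calculus for `exp (c * F)`, where `F` is a primitive of a locally
integrable function `f`. -/
theorem integral_mul_exp_primitive {f F : ℝ → ℝ} (hf : LocallyIntegrable f volume)
    (hF : ∀ y, F y = ∫ z in (0 : ℝ)..y, f z) (c p q : ℝ) :
    ∫ x in p..q, c * f x * Real.exp (c * F x) = Real.exp (c * F q) - Real.exp (c * F p) := by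
  have hint (x y : ℝ) : IntervalIntegrable f volume x y :=
    (hf.integrableOn_isCompact isCompact_uIcc).intervalIntegrable
  have hac : AbsolutelyContinuousOnInterval F p q := by
    rw [funext hF]
    have hp := abs_le.1 (le_max_left |p| |q|)
    have hq := abs_le.1 (le_max_right |p| |q|)
    have hIcc := uIcc_of_le (hp.1.trans hp.2)
    refine ((hint (-max |p| |q|) (max |p| |q|)
      ).absolutelyContinuousOnInterval_intervalIntegral (c := 0) ?_).mono
      (uIcc_subset_uIcc (hIcc ▸ hp) (hIcc ▸ hq))
    rw [hIcc]
    constructor <;> linarith [hp.1, hp.2]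
  have hexp : ContDiff ℝ 1 fun v : ℝ => Real.exp (c * v) := by fun_prop
  have hftc := (hexp.comp_absolutelyContinuousOnInterval hac).integral_deriv_eq_sub
  simp only [Function.comp_apply] at hftc
  rw [← hftc]
  refine intervalIntegral.integral_congr_ae ?_
  filter_upwards [LocallyIntegrable.ae_hasDerivAt_integral hf] with x hx _
  have hFx : HasDerivAt F (f x) x := by rw [funext hF]; exact hx 0
  have := (hFx.const_mul c).exp.deriv
  rw [mul_comm]
  exact this.symm

/-- Let `b` be locally square integrable, `B(y) = ∫_0^y b`,
`s(x) = ∫_0^x exp(−2B(y)) dy`, `J = s(ℝ)` and `t` the inverse of `s`. Then `t` is continuously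
differentiable on `J` with `t'(u) = exp(2B(t(u))) > 0`; `t'` is absolutely continuous on every
compact subinterval of `J` with a.e. derivative `t''(u) = 2 b(t(u)) t'(u)²`; and for every
compact interval `K ⊆ J`, `∫_K t''(u)²/t'(u)³ du = 4 ∫_{t(K)} b(x)² dx`. -/
theorem stmt14 (b : ℝ → ℝ) (hb : Measurable b)
    (hbsq : ∀ K : Set ℝ, IsCompact K → IntegrableOn (fun z => (b z) ^ 2) K volume)
    (B s : ℝ → ℝ)
    (hB : ∀ y : ℝ, B y = ∫ z in (0:ℝ)..y, b z)
    (hs : ∀ x : ℝ, s x = ∫ y in (0:ℝ)..x, Real.exp (-2 * B y))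
    (t : ℝ → ℝ) (hts : ∀ x : ℝ, t (s x) = x) (hst : ∀ u ∈ Set.range s, s (t u) = u) :
    (∀ u ∈ Set.range s,
      HasDerivAt t (Real.exp (2 * B (t u))) u ∧ 0 < Real.exp (2 * B (t u))) ∧
    ContinuousOn (fun u => Real.exp (2 * B (t u))) (Set.range s) ∧
    (∀ a' b' : ℝ, Set.Icc a' b' ⊆ Set.range s →
      IntegrableOn (fun u => 2 * b (t u) * (Real.exp (2 * B (t u))) ^ 2)
        (Set.Icc a' b') volume ∧
      (∀ x ∈ Set.Icc a' b', ∀ y ∈ Set.Icc a' b', x ≤ y →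
        Real.exp (2 * B (t y)) - Real.exp (2 * B (t x)) =
          ∫ u in x..y, 2 * b (t u) * (Real.exp (2 * B (t u))) ^ 2)) ∧
    (∀ a' b' : ℝ, Set.Icc a' b' ⊆ Set.range s →
      ∫ u in Set.Icc a' b',
          (2 * b (t u) * (Real.exp (2 * B (t u))) ^ 2) ^ 2 / (Real.exp (2 * B (t u))) ^ 3
        = 4 * ∫ x in t '' Set.Icc a' b', (b x) ^ 2) := by
  have hbloc : LocallyIntegrable b volume := by
    rw [locallyIntegrable_iff]
    intro K hK
    have : IsFiniteMeasure (volume.restrict K) := ⟨by simpa using hK.measure_lt_top⟩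
    exact ((memLp_two_iff_integrable_sq hb.aestronglyMeasurable).2 (hbsq K hK)).integrable
      one_le_two
  have hBcont : Continuous B := by
    rw [funext hB]
    exact intervalIntegral.continuous_primitive
      (fun x y => (hbloc.integrableOn_isCompact isCompact_uIcc).intervalIntegrable) 0
  have hs' (x : ℝ) : HasStrictDerivAt s (Real.exp (-2 * B x)) x := by
    rw [funext hs]
    have hcont : Continuous fun y => Real.exp (-2 * B y) := by fun_prop
    exact intervalIntegral.integral_hasStrictDerivAt_right (hcont.intervalIntegrable _ _)
      (hcont.stronglyMeasurableAtFilter _ _) hcont.continuousAt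
  have hmono : StrictMono s := strictMono_of_hasDerivAt_pos (fun x => (hs' x).hasDerivAt)
    fun x => Real.exp_pos _
  have hscont : Continuous s := continuous_iff_continuousAt.2 fun x => (hs' x).hasDerivAt.continuousAt
  have ht' : ∀ u ∈ range s, HasDerivAt t (Real.exp (2 * B (t u))) u := by
    rintro _ ⟨x, rfl⟩
    have h := ((hs' x).to_local_left_inverse (Real.exp_ne_zero _)
      (Eventually.of_forall hts)).hasDerivAt
    rw [hts]
    rwa [← Real.exp_neg, neg_mul, neg_neg] at h
  have htcont : ContinuousOn t (range s) := fun u hu => (ht' u hu).continuousAt.continuousWithinAt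
  have himage {K : Set ℝ} (hK : K ⊆ range s) : t '' K = s ⁻¹' K := by
    ext x
    constructor
    · rintro ⟨u, hu, rfl⟩
      rwa [mem_preimage, hst u (hK hu)]
    · exact fun hx => ⟨s x, hx, hts x⟩
  have hjac (x : ℝ) : |Real.exp (-2 * B x)| • (2 * b (t (s x)) * Real.exp (2 * B (t (s x))) ^ 2)
      = 2 * b x * Real.exp (2 * B x) := by
    rw [hts, Real.abs_exp, neg_mul, Real.exp_neg, smul_eq_mul]
    field_simp
  have hderiv (S : Set ℝ) : ∀ x ∈ S, HasDerivWithinAt s (Real.exp (-2 * B x)) S x :=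
    fun x _ => (hs' x).hasDerivAt.hasDerivWithinAt
  refine ⟨fun u hu => ⟨ht' u hu, Real.exp_pos _⟩, ?_, fun a' b' hK => ⟨?_, ?_⟩, fun a' b' hK => ?_⟩
  · exact (Real.continuous_exp.comp (hBcont.const_mul 2)).comp_continuousOn htcont
  · have hcomp : IsCompact (s ⁻¹' Icc a' b') :=
      himage hK ▸ isCompact_Icc.image_of_continuousOn (htcont.mono hK)
    rw [← image_preimage_eq_of_subset hK, integrableOn_image_iff_integrableOn_abs_deriv_smul
      hcomp.measurableSet (hderiv _) hmono.injective.injOn]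
    simp only [hjac]
    exact IntegrableOn.mul_continuousOn ((hbloc.integrableOn_isCompact hcomp).const_mul 2)
      (by fun_prop) hcomp
  · intro x hx y hy hxy
    obtain ⟨p, rfl⟩ := hK hx
    obtain ⟨q, rfl⟩ := hK hy
    have hpre : s ⁻¹' Icc (s p) (s q) = Icc p q := by
      ext z
      simp [hmono.le_iff_le]
    have hsub : Icc (s p) (s q) ⊆ range s := (Icc_subset_Icc hx.1 hy.2).trans hK
    rw [intervalIntegral.integral_of_le hxy, ← integral_Icc_eq_integral_Ioc,
      ← image_preimage_eq_of_subset hsub, hpre, integral_image_eq_integral_abs_deriv_smul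
      measurableSet_Icc (hderiv _) hmono.injective.injOn]
    simp only [hjac]
    rw [integral_Icc_eq_integral_Ioc, ← intervalIntegral.integral_of_le (hmono.le_iff_le.1 hxy),
      integral_mul_exp_primitive hbloc hB, hts, hts]
  · rw [himage hK]
    nth_rewrite 1 [← image_preimage_eq_of_subset hK]
    rw [integral_image_eq_integral_abs_deriv_smul (hscont.measurable measurableSet_Icc)
      (hderiv _) hmono.injective.injOn, ← integral_const_mul]
    refine integral_congr_ae (Eventually.of_forall fun x => ?_)
    simp only [hts, Real.abs_exp, smul_eq_mul]
    rw [neg_mul, Real.exp_neg]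
    field_simp
    ring
end

section
/- Let s : ℝ → ℝ be strictly increasing and continuous with s(0) = 0, let μ be its Stieltjes measure, and let μ = g·λ + κ be its Lebesgue decomposition (g ≥ 0 locally integrable, κ ⊥ λ) with κ ≠ 0. Assume further that Lebesgue measure λ is absolutely continuous with respect to μ. Then the set of strictly increasing continuous functions σ : ℝ → ℝ with σ(0) = 0 whose Stieltjes measure ν satisfies g·λ ≤ ν ≤ μ, ν ≪ μ with Radon–Nikodym derivative dν/dμ taking only the values 0 and 1 μ-almost everywhere, and λ ≪ ν, is uncountable. -/
open MeasureTheory Set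

/-- A function whose increments are nonnegative and dominated by those of a continuous function
is continuous. -/
theorem continuous_of_sub_mem_Icc {s f : ℝ → ℝ} (hs : Continuous s)
    (hf : ∀ x y, x ≤ y → f y - f x ∈ Icc 0 (s y - s x)) : Continuous f := by
  have key : ∀ x y, |f y - f x| ≤ |s y - s x| := by
    intro x y
    rcases le_total x y with h | h
    · obtain ⟨h0, h1⟩ := hf x y h
      rw [abs_of_nonneg h0]
      exact h1.trans (le_abs_self _)
    · obtain ⟨h0, h1⟩ := hf y x h
      rw [abs_sub_comm, abs_of_nonneg h0, abs_sub_comm]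
      exact h1.trans (le_abs_self _)
  refine continuous_iff_continuousAt.2 fun x => tendsto_iff_dist_tendsto_zero.2 ?_
  exact squeeze_zero (fun _ => dist_nonneg) (fun y => key x y)
    (tendsto_iff_dist_tendsto_zero.1 (hs.tendsto x))

/-- A measure whose value on each `Ioc x y` is a real increment is locally finite. -/
theorem isLocallyFiniteMeasure_of_Ioc {s : ℝ → ℝ} {μ : Measure ℝ}
    (hμ : ∀ x y : ℝ, x ≤ y → μ (Ioc x y) = ENNReal.ofReal (s y - s x)) :
    IsLocallyFiniteMeasure μ := by
  refine ⟨fun x => ⟨Ioc (x - 1) (x + 1), Ioc_mem_nhds (by linarith) (by linarith), ?_⟩⟩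
  rw [hμ _ _ (by linarith)]
  exact ENNReal.ofReal_lt_top

/-- The distribution function of `ν` normalised to vanish at `0`. -/
noncomputable def distribution (ν : Measure ℝ) (x : ℝ) : ℝ := ∫ _ in (0 : ℝ)..x, (1 : ℝ) ∂ν

theorem distribution_zero (ν : Measure ℝ) : distribution ν 0 = 0 :=
  intervalIntegral.integral_same

theorem distribution_sub (ν : Measure ℝ) [IsLocallyFiniteMeasure ν] {x y : ℝ} (h : x ≤ y) :
    distribution ν y - distribution ν x = ν.real (Ioc x y) := by
  unfold distribution
  rw [intervalIntegral.integral_interval_sub_left intervalIntegrable_const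
    intervalIntegrable_const, intervalIntegral.integral_of_le h]
  simp

/-- Let `s : ℝ → ℝ` be strictly increasing, continuous, `s(0) = 0`, with
Stieltjes measure `μ = g·λ + κ`, `κ ⊥ λ`, `κ ≠ 0`, and `λ ≪ μ`. The set of strictly
increasing continuous `σ` with `σ(0) = 0` whose Stieltjes measure `ν` satisfies
`g·λ ≤ ν ≤ μ`, `ν ≪ μ` with `dν/dμ ∈ {0,1}` μ-a.e., and `λ ≪ ν`, is uncountable. -/
theorem stmt15 (s : ℝ → ℝ) (hmono : StrictMono s) (hcont : Continuous s) (hs0 : s 0 = 0)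
    (μ : Measure ℝ)
    (hμ : ∀ x y : ℝ, x ≤ y → μ (Set.Ioc x y) = ENNReal.ofReal (s y - s x))
    (g : ℝ → ℝ) (hg0 : ∀ x, 0 ≤ g x) (hgloc : LocallyIntegrable g volume)
    (κ : Measure ℝ)
    (hdecomp : μ = volume.withDensity (fun x => ENNReal.ofReal (g x)) + κ)
    (hsing : κ.MutuallySingular volume) (hκ : κ ≠ 0)
    (habs : volume ≪ μ) :
    ¬ Set.Countable {σ : ℝ → ℝ | StrictMono σ ∧ Continuous σ ∧ σ 0 = 0 ∧
      ∃ ν : Measure ℝ,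
        (∀ x y : ℝ, x ≤ y → ν (Set.Ioc x y) = ENNReal.ofReal (σ y - σ x)) ∧
        volume.withDensity (fun x => ENNReal.ofReal (g x)) ≤ ν ∧ ν ≤ μ ∧
        ν ≪ μ ∧ (∀ᵐ x ∂μ, ν.rnDeriv μ x = 0 ∨ ν.rnDeriv μ x = 1) ∧
        volume ≪ ν} := by
  intro hcount
  have : IsLocallyFiniteMeasure μ := isLocallyFiniteMeasure_of_Ioc hμ
  have hμreal : ∀ x y : ℝ, x ≤ y → μ.real (Ioc x y) = s y - s x := fun x y h => by
    rw [measureReal_def, hμ x y h, ENNReal.toReal_ofReal (sub_nonneg.2 (hmono.monotone h))]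
  have hfin : ∀ x y : ℝ, μ (Ioc x y) ≠ ⊤ := fun x y => measure_Ioc_lt_top.ne
  obtain ⟨N, hN, hκN, hvolN⟩ := hsing
  set γ := volume.withDensity (fun x => ENNReal.ofReal (g x))
  have hγN : γ Nᶜ = 0 := withDensity_absolutelyContinuous _ _ hvolN
  -- The competitors: `μ` restricted to a carrier of Lebesgue measure together with a half-line.
  let E : ℝ → Set ℝ := fun t => N ∪ Iic t
  have hE : ∀ t, MeasurableSet (E t) := fun t => hN.union measurableSet_Iic
  have hNE : ∀ t, N ⊆ E t := fun t => subset_union_left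
  let σ : ℝ → ℝ → ℝ := fun t => distribution (μ.restrict (E t))
  have hσsub : ∀ t x y, x ≤ y → σ t y - σ t x = μ.real (Ioc x y ∩ E t) := fun t x y h => by
    rw [distribution_sub _ h, measureReal_restrict_apply measurableSet_Ioc]
  have hvol : ∀ t, volume ≪ μ.restrict (E t) := by
    intro t A hA
    have hA' : μ (A ∩ E t) = 0 := by rwa [Measure.restrict_apply' (hE t)] at hA
    have h1 : volume (A ∩ N) = 0 :=
      habs (measure_mono_null (inter_subset_inter_right _ (hNE t)) hA')
    refine measure_mono_null (t := A ∩ N ∪ Nᶜ) (fun x hx => ?_) (measure_union_null h1 hvolN)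
    by_cases hxN : x ∈ N
    · exact Or.inl ⟨hx, hxN⟩
    · exact Or.inr hxN
  have hmem : ∀ t, σ t ∈ {σ : ℝ → ℝ | StrictMono σ ∧ Continuous σ ∧ σ 0 = 0 ∧
      ∃ ν : Measure ℝ,
        (∀ x y : ℝ, x ≤ y → ν (Set.Ioc x y) = ENNReal.ofReal (σ y - σ x)) ∧
        γ ≤ ν ∧ ν ≤ μ ∧
        ν ≪ μ ∧ (∀ᵐ x ∂μ, ν.rnDeriv μ x = 0 ∨ ν.rnDeriv μ x = 1) ∧
        volume ≪ ν} := by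
    intro t
    refine ⟨fun x y hxy => ?_, ?_, distribution_zero _, μ.restrict (E t), fun x y h => ?_, ?_,
      Measure.restrict_le_self, Measure.absolutelyContinuous_of_le Measure.restrict_le_self,
      ?_, hvol t⟩
    · rw [← sub_pos, distribution_sub _ hxy.le, measureReal_def, ENNReal.toReal_pos_iff]
      refine ⟨pos_iff_ne_zero.2 fun h0 => ?_, measure_Ioc_lt_top⟩
      have h1 := hvol t h0
      rw [Real.volume_Ioc, ENNReal.ofReal_eq_zero] at h1
      linarith
    · refine continuous_of_sub_mem_Icc hcont fun x y h => ?_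
      rw [hσsub t x y h, ← hμreal x y h]
      exact ⟨measureReal_nonneg, measureReal_mono inter_subset_left (hfin x y)⟩
    · rw [distribution_sub _ h, measureReal_def, ENNReal.ofReal_toReal measure_Ioc_lt_top.ne]
    · refine Measure.le_iff.2 fun A hA => ?_
      rw [Measure.restrict_apply hA]
      calc γ A ≤ γ (A ∩ N ∪ Nᶜ) := measure_mono fun x hx => by
            by_cases hxN : x ∈ N
            · exact Or.inl ⟨hx, hxN⟩
            · exact Or.inr hxN
        _ ≤ γ (A ∩ N) + γ Nᶜ := measure_union_le _ _
        _ = γ (A ∩ N) := by rw [hγN, add_zero]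
        _ ≤ γ (A ∩ E t) := measure_mono (inter_subset_inter_right _ (hNE t))
        _ ≤ μ (A ∩ E t) := by rw [hdecomp, Measure.add_apply]; exact le_self_add
    · filter_upwards [Measure.rnDeriv_restrict_self μ (hE t)] with x hx
      rw [hx]
      by_cases hxE : x ∈ E t
      · exact Or.inr (by simp [hxE])
      · exact Or.inl (by simp [hxE])
  -- A bounded interval charged by the singular part.
  obtain ⟨n, hn⟩ : ∃ n : ℕ, κ (Ioc (-(n : ℝ)) n) ≠ 0 := by
    by_contra! h
    refine hκ (Measure.measure_univ_eq_zero.1 (measure_mono_null (fun x _ => ?_)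
      (measure_iUnion_null h)))
    obtain ⟨m, hm⟩ := exists_nat_gt |x|
    obtain ⟨h1, h2⟩ := abs_lt.1 hm
    exact mem_iUnion.2 ⟨m, h1, h2.le⟩
  set a : ℝ := -(n : ℝ)
  set b : ℝ := (n : ℝ)
  have hab : a ≤ b := neg_le_self n.cast_nonneg
  let F : ℝ → ℝ := fun t => σ t b - σ t a
  have hFcont : Continuous F := by
    refine continuous_of_sub_mem_Icc hcont fun x y h => ?_
    simp only [F, hσsub _ _ _ hab]
    have hfinE : ∀ t, μ (Ioc a b ∩ E t) ≠ ⊤ := fun t =>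
      measure_ne_top_of_subset inter_subset_left (hfin a b)
    have hsub : E x ⊆ E y := union_subset_union_right _ (Iic_subset_Iic.2 h)
    refine ⟨sub_nonneg.2 (measureReal_mono (inter_subset_inter_right _ hsub) (hfinE y)), ?_⟩
    rw [sub_le_iff_le_add', ← hμreal x y h]
    refine (measureReal_mono ?_ (measure_union_lt_top (hfinE x).lt_top
      (hfin x y).lt_top).ne).trans (measureReal_union_le _ _)
    rintro z ⟨hz, hzN | hzy⟩
    · exact Or.inl ⟨hz, Or.inl hzN⟩
    · rcases le_or_gt z x with hzx | hzx
      · exact Or.inl ⟨hz, Or.inr hzx⟩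
      · exact Or.inr ⟨hzx, hzy⟩
  have hFlt : F a < F b := by
    have hEa : Ioc a b ∩ E a = Ioc a b ∩ N := by
      ext z
      simp only [E, mem_inter_iff, mem_union, mem_Ioc, mem_Iic]
      grind
    have hEb : Ioc a b ∩ E b = Ioc a b := inter_eq_left.2 fun z hz => Or.inr hz.2
    simp only [F, hσsub _ _ _ hab, hEa, hEb]
    rw [← measureReal_inter_add_sdiff hN (hfin a b), lt_add_iff_pos_right, measureReal_def,
      ENNReal.toReal_pos_iff]
    refine ⟨pos_iff_ne_zero.2 fun h0 => hn ?_,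
      (measure_mono sdiff_subset).trans_lt (hfin a b).lt_top⟩
    rw [hdecomp, Measure.add_apply, add_eq_zero] at h0
    refine measure_mono_null (t := Ioc a b \ N ∪ N) ?_ (measure_union_null h0.2 hκN)
    rw [sdiff_union_self]
    exact subset_union_left
  refine Cardinal.Real.Icc_countable_iff.not.2 (not_le.2 hFlt) ?_
  refine (hcount.image fun τ => τ b - τ a).mono
    ((intermediate_value_Icc hab hFcont.continuousOn).trans ?_)
  rintro _ ⟨t, -, rfl⟩
  exact ⟨σ t, hmem t, rfl⟩
end

section
/- For γ > 0 define ρ(x) := (γ/(2π)) · exp(−2γ‖x‖)/‖x‖² for x ∈ ℝ³ ∖ {0}. Then for every smooth function u : ℝ³ → ℝ with compact support contained in ℝ³ ∖ {0} and each i ∈ {1,2,3}, (1/2) ∫_{ℝ³} ∂u/∂x_i(x) ρ(x) dx = ∫_{ℝ³} u(x) · ((γ‖x‖ + 1) x_i / ‖x‖²) · ρ(x) dx. -/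
open MeasureTheory Set

/-- The product of a continuous compactly supported function with a function that is continuous
at every point of its support is integrable. -/
theorem integrable_mul_of_continuousAt_tsupport {E : Type*} [TopologicalSpace E]
    [MeasurableSpace E] [OpensMeasurableSpace E]
    {μ : Measure E} [IsFiniteMeasureOnCompacts μ] {f g : E → ℝ}
    (hf : Continuous f) (hc : HasCompactSupport f) (hg : ∀ x ∈ tsupport f, ContinuousAt g x) :
    Integrable (fun x ↦ f x * g x) μ := by
  refine Continuous.integrable_of_hasCompactSupport ?_ hc.mul_right
  exact continuous_of_tsupport fun x hx ↦
    hf.continuousAt.mul (hg x (tsupport_mul_subset_left hx))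

/-- The derivative of the density `c exp(−2γ‖x‖)/‖x‖²` in direction `v`, away from the origin. -/
theorem hasLineDerivAt_exp_norm_div_norm_sq {E : Type*} [NormedAddCommGroup E]
    [InnerProductSpace ℝ E] (γ c : ℝ) {x : E} (hx : x ≠ 0) (v : E) :
    HasLineDerivAt ℝ (fun y : E ↦ c * (Real.exp (-2 * γ * ‖y‖) / ‖y‖ ^ 2))
      (-2 * ((γ * ‖x‖ + 1) * inner ℝ x v / ‖x‖ ^ 2 *
        (c * (Real.exp (-2 * γ * ‖x‖) / ‖x‖ ^ 2)))) x v := by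
  have hx' : ‖x‖ ≠ 0 := norm_ne_zero_iff.mpr hx
  have hline : HasDerivAt (fun t : ℝ ↦ x + t • v) v 0 := by
    simpa using ((hasDerivAt_id (0 : ℝ)).smul_const v).const_add x
  have hsq : HasDerivAt (fun t : ℝ ↦ ‖x + t • v‖ ^ 2) (2 * inner ℝ x v) 0 := by
    simpa using hline.norm_sq
  have hnorm : HasDerivAt (fun t : ℝ ↦ ‖x + t • v‖) (inner ℝ x v / ‖x‖) 0 := by
    convert! hsq.sqrt (by simpa using hx) using 1
    · simp
    · simp
      field_simp
  unfold HasLineDerivAt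
  convert! (((hnorm.const_mul (-2 * γ)).exp.div hsq (by simpa using hx)).const_mul c) using 1
  simp only [zero_smul, add_zero]
  field_simp
  ring

/-- For `γ > 0` and `ρ(x) = (γ/(2π)) exp(−2γ‖x‖)/‖x‖²` on `ℝ³ ∖ {0}`, every
smooth `u` with compact support in `ℝ³ ∖ {0}` satisfies, for each coordinate `i`,
`(1/2) ∫ ∂u/∂xᵢ(x) ρ(x) dx = ∫ u(x) ((γ‖x‖+1) xᵢ/‖x‖²) ρ(x) dx`. -/
theorem stmt18 (γ : ℝ) (hγ : 0 < γ)
    (u : EuclideanSpace ℝ (Fin 3) → ℝ) (hu : ContDiff ℝ (⊤ : ℕ∞) u)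
    (hc : HasCompactSupport u)
    (hsupp : tsupport u ⊆ ({0}ᶜ : Set (EuclideanSpace ℝ (Fin 3)))) (i : Fin 3) :
    (1 / 2) * ∫ x : EuclideanSpace ℝ (Fin 3),
        fderiv ℝ u x (EuclideanSpace.single i 1) *
          (γ / (2 * Real.pi) * (Real.exp (-2 * γ * ‖x‖) / ‖x‖ ^ 2)) =
      ∫ x : EuclideanSpace ℝ (Fin 3),
        u x * ((γ * ‖x‖ + 1) * x i / ‖x‖ ^ 2) *
          (γ / (2 * Real.pi) * (Real.exp (-2 * γ * ‖x‖) / ‖x‖ ^ 2)) := by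
  have hne : ∀ x ∈ tsupport u, x ≠ 0 := fun x hx ↦ hsupp hx
  set ρ : EuclideanSpace ℝ (Fin 3) → ℝ := fun x ↦
    γ / (2 * Real.pi) * (Real.exp (-2 * γ * ‖x‖) / ‖x‖ ^ 2) with hρ
  have hρc : ∀ x ≠ 0, ContinuousAt ρ x := fun x hx ↦ by
    have : ‖x‖ ^ 2 ≠ 0 := by simpa using hx
    fun_prop (disch := assumption)
  have hρ'c : ∀ x ≠ 0, ContinuousAt (fun x ↦ -2 * ((γ * ‖x‖ + 1) * x i / ‖x‖ ^ 2 * ρ x)) x :=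
    fun x hx ↦ by
      have : ‖x‖ ^ 2 ≠ 0 := by simpa using hx
      have := hρc x hx
      fun_prop (disch := assumption)
  have hu' : Continuous (fun x ↦ fderiv ℝ u x (EuclideanSpace.single i 1)) :=
    (hu.continuous_fderiv (by simp)).clm_apply continuous_const
  have hderiv : ∀ x ∈ tsupport u, HasLineDerivAt ℝ ρ
      (-2 * ((γ * ‖x‖ + 1) * x i / ‖x‖ ^ 2 * ρ x)) x (EuclideanSpace.single i 1) :=
    fun x hx ↦ by
      simpa [hρ, EuclideanSpace.inner_single_right] using
        hasLineDerivAt_exp_norm_div_norm_sq γ (γ / (2 * Real.pi)) (hne x hx)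
          (EuclideanSpace.single i 1)
  have hparts := integral_bilinear_hasLineDerivAt_right_eq_neg_left_of_integrable
    (μ := volume) (B := ContinuousLinearMap.mul ℝ ℝ)
    (integrable_mul_of_continuousAt_tsupport hu' (hc.fderiv_apply ℝ _)
      fun x hx ↦ hρc x (hne x (tsupport_fderiv_apply_subset ℝ _ hx)))
    (integrable_mul_of_continuousAt_tsupport hu.continuous hc fun x hx ↦ hρ'c x (hne x hx))
    (integrable_mul_of_continuousAt_tsupport hu.continuous hc fun x hx ↦ hρc x (hne x hx))
    (fun x _ ↦ ((hu.differentiable (by simp)) x).hasFDerivAt.hasLineDerivAt _) hderiv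
  simp only [ContinuousLinearMap.mul_apply', mul_left_comm _ (-2 : ℝ), integral_const_mul,
    ← mul_assoc (u _)] at hparts
  linarith
end
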